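/- arXiv:1904.12829 — 12 statements merged into one kernel-verified Lean document; each statement's English description precedes it below -/
import Mathlib

section
/- Let C be a category satisfying the stated assumptions. Given monomorphisms b : B → D and c : C → D, let (p : A → B, q : A → C) be a pullback of the cospan (b, c) (so p and q are monomorphisms), let (e : B → U, f : C → U) be a pushout of the span (p, q), and let d : U → D be the unique morphism with d ∘ e = b and d ∘ f = c. Then d is a monomorphism (i.e. C has effective unions). -/
open CategoryTheory CategoryTheory.Limits

universe v u

/-- The ambient category possesses an epi-mono factorization. -/
def HasEpiMonoFact (𝒞 : Type u) [Category.{v} 𝒞] : Prop :=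
  ∀ {X Y : 𝒞} (f : X ⟶ Y), ∃ (Z : 𝒞) (e : X ⟶ Z) (m : Z ⟶ Y),
    Epi e ∧ Mono m ∧ e ≫ m = f

/-- The ambient category is finitary: every object has only finitely many subobjects. -/
def Finitary (𝒞 : Type u) [Category.{v} 𝒞] : Prop :=
  ∀ X : 𝒞, Finite (Subobject X)

/-!
Suppose `h ≫ d = k ≫ d` for `h, k : K ⟶ U`. Pushouts along monomorphisms are stable under
pullback, so pulling the pushout `U` back along `h` and along `k` covers `K` by four jointly
epimorphic pieces, on each of which `h` factors through `B` or `Co`, and so does `k`. Where both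
factor through the same object they agree because `b` and `c` are monomorphisms; where one factors
through `B` and the other through `Co`, the two factors induce a map to the pullback `A`, and
`p ≫ e = q ≫ f` gives the agreement. This is Theorem 5.1 of Lack and Sobociński, *Adhesive
categories*; `Adhesive.desc_mono_of_mono` states it for the chosen pullback and pushout, so what
remains is the comparison with arbitrary ones.
-/

section

variable {𝒞 : Type u} [Category.{v} 𝒞]

theorem isPushout_of_isPullback_of_isPullback {A A' B C D U : 𝒞} {b : B ⟶ D} {c : C ⟶ D}
    {p : A ⟶ B} {q : A ⟶ C} {p' : A' ⟶ B} {q' : A' ⟶ C} {e : B ⟶ U} {f : C ⟶ U}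
    (hpb : IsPullback p q b c) (hpb' : IsPullback p' q' b c) (hpo : IsPushout p q e f) :
    IsPushout p' q' e f :=
  hpo.of_iso (hpb.isoIsPullback B C hpb') (.refl B) (.refl C) (.refl U)
    (by simp) (by simp) (by simp) (by simp)

theorem isoPushout_hom_comp_desc {A B C D U : 𝒞} {p : A ⟶ B} {q : A ⟶ C} {e : B ⟶ U} {f : C ⟶ U}
    [HasPushout p q] (hpo : IsPushout p q e f) (d : U ⟶ D) :
    hpo.isoPushout.hom ≫ pushout.desc (e ≫ d) (f ≫ d) (hpo.w_assoc d) = d :=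
  hpo.hom_ext (by simp [pushout.inl_desc]) (by simp [pushout.inr_desc])

theorem effective_unions_general [Adhesive 𝒞] {A B C D U : 𝒞} (b : B ⟶ D) (c : C ⟶ D)
    [Mono b] [Mono c] (p : A ⟶ B) (q : A ⟶ C) (hpb : IsPullback p q b c)
    (e : B ⟶ U) (f : C ⟶ U) (hpo : IsPushout p q e f)
    (d : U ⟶ D) (hd1 : e ≫ d = b) (hd2 : f ≫ d = c) :
    Mono d := by
  subst hd1 hd2
  have hpo' : IsPushout (pullback.fst (e ≫ d) (f ≫ d)) (pullback.snd (e ≫ d) (f ≫ d)) e f :=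
    isPushout_of_isPullback_of_isPullback hpb (.of_hasPullback _ _) hpo
  rw [← isoPushout_hom_comp_desc hpo' d]
  exact mono_comp _ _

end

/-- **Effective unions.** In an adhesive, finitary category with epi-mono factorization
and a strict initial object, given monomorphisms `b : B ⟶ D` and `c : Co ⟶ D`, the
pullback `(p, q)` of `(b, c)`, the pushout `(e, f)` of `(p, q)`, and the induced
morphism `d : U ⟶ D`, the morphism `d` is a monomorphism. -/
theorem effective_unions
    {𝒞 : Type u} [Category.{v} 𝒞] [Adhesive 𝒞]
    [HasInitial 𝒞] [HasStrictInitialObjects 𝒞] [InitialMonoClass 𝒞]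
    (hfact : HasEpiMonoFact 𝒞) (hfin : Finitary 𝒞)
    {A B Co D U : 𝒞}
    (b : B ⟶ D) (c : Co ⟶ D) [Mono b] [Mono c]
    (p : A ⟶ B) (q : A ⟶ Co) (hpb : IsPullback p q b c)
    (e : B ⟶ U) (f : Co ⟶ U) (hpo : IsPushout p q e f)
    (d : U ⟶ D) (hd1 : e ≫ d = b) (hd2 : f ≫ d = c) :
    Mono d :=
  effective_unions_general b c p q hpb e f hpo d hd1 hd2
end

section
/- Let C be a category satisfying the stated assumptions. Suppose b1 : A → B1 and b2 : A → B2 are monomorphisms, (d1 : B1 → D, d2 : B2 → D) is a pushout of (b1, b2), e1 : B1 → E and e2 : B2 → E are monomorphisms such that (b1, b2) is a pullback of the cospan (e1, e2), and e : D → E is a morphism with e ∘ d1 = e1 and e ∘ d2 = e2. Then e is an epimorphism if and only if the exterior square is a pushout, i.e. if and only if (e1, e2) is a pushout of (b1, b2). -/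
open CategoryTheory CategoryTheory.Limits

universe v u

/-!
In an adhesive category the union of two subobjects `B1` and `B2` of `E` is the pushout of `B1` and
`B2` over their intersection (Lack and Sobociński, *Adhesive categories*, Theorem 5.1), so the
comparison morphism `D ⟶ E` is a monomorphism. Adhesive categories are balanced, so this
monomorphism is epi iff it is an isomorphism, iff `E` is itself a pushout.
-/

section

variable {𝒞 : Type u} [Category.{v} 𝒞] {A B1 B2 D E : 𝒞} {b1 : A ⟶ B1} {b2 : A ⟶ B2}
  {d1 : B1 ⟶ D} {d2 : B2 ⟶ D} {e1 : B1 ⟶ E} {e2 : B2 ⟶ E} {e : D ⟶ E}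

theorem isPushout_iff_isIso_of_isPushout (hpo : IsPushout b1 b2 d1 d2)
    (h1 : d1 ≫ e = e1) (h2 : d2 ≫ e = e2) : IsPushout b1 b2 e1 e2 ↔ IsIso e := by
  constructor
  · intro hE
    have he : e = (hpo.isoIsPushout _ _ hE).hom := hpo.hom_ext (by simp [h1]) (by simp [h2])
    rw [he]
    infer_instance
  · intro _
    exact hpo.of_iso (Iso.refl _) (Iso.refl _) (Iso.refl _) (asIso e)
      (by simp) (by simp) (by simp [h1]) (by simp [h2])

theorem mono_of_isPushout_of_isPullback [Adhesive 𝒞] [Mono e1] [Mono e2]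
    (hpo : IsPushout b1 b2 d1 d2) (hpb : IsPullback b1 b2 e1 e2)
    (h1 : d1 ≫ e = e1) (h2 : d2 ≫ e = e2) : Mono e := by
  have hD : IsPushout (pullback.fst e1 e2) (pullback.snd e1 e2) d1 d2 :=
    hpo.of_iso hpb.isoPullback (Iso.refl _) (Iso.refl _) (Iso.refl _)
      (by simp) (by simp) (by simp) (by simp)
  have he : e = hD.isoPushout.hom ≫ pushout.desc e1 e2 pullback.condition :=
    hD.hom_ext (by rw [h1, hD.inl_isoPushout_hom_assoc, pushout.inl_desc])
      (by rw [h2, hD.inr_isoPushout_hom_assoc, pushout.inr_desc])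
  rw [he]
  infer_instance

theorem epi_iff_exterior_pushout_general [Adhesive 𝒞] [Mono e1] [Mono e2]
    (hpo : IsPushout b1 b2 d1 d2) (hpb : IsPullback b1 b2 e1 e2)
    (h1 : d1 ≫ e = e1) (h2 : d2 ≫ e = e2) : Epi e ↔ IsPushout b1 b2 e1 e2 := by
  have : Mono e := mono_of_isPushout_of_isPullback hpo hpb h1 h2
  calc Epi e ↔ IsIso e := by simp [isIso_iff_mono_and_epi, this]
    _ ↔ IsPushout b1 b2 e1 e2 := (isPushout_iff_isIso_of_isPushout hpo h1 h2).symm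

end

/-- **Characterization of epimorphisms via pushouts.** Given monomorphisms
`b1 : A ⟶ B1`, `b2 : A ⟶ B2`, a pushout `(d1, d2)` of `(b1, b2)`, monomorphisms
`e1 : B1 ⟶ E`, `e2 : B2 ⟶ E` such that `(b1, b2)` is a pullback of `(e1, e2)`, and a
morphism `e : D ⟶ E` with `d1 ≫ e = e1` and `d2 ≫ e = e2`, the morphism `e` is an
epimorphism if and only if the exterior square `(e1, e2)` is a pushout of `(b1, b2)`. -/
theorem epi_iff_exterior_pushout
    {𝒞 : Type u} [Category.{v} 𝒞] [Adhesive 𝒞]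
    [HasInitial 𝒞] [HasStrictInitialObjects 𝒞] [InitialMonoClass 𝒞]
    (hfact : HasEpiMonoFact 𝒞) (hfin : Finitary 𝒞)
    {A B1 B2 D E : 𝒞}
    (b1 : A ⟶ B1) (b2 : A ⟶ B2) [Mono b1] [Mono b2]
    (d1 : B1 ⟶ D) (d2 : B2 ⟶ D) (hpo : IsPushout b1 b2 d1 d2)
    (e1 : B1 ⟶ E) (e2 : B2 ⟶ E) [Mono e1] [Mono e2]
    (hpb : IsPullback b1 b2 e1 e2)
    (e : D ⟶ E) (h1 : d1 ≫ e = e1) (h2 : d2 ≫ e = e2) :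
    Epi e ↔ IsPushout b1 b2 e1 e2 :=
  epi_iff_exterior_pushout_general hpo hpb h1 h2
end

section
/- Let C be a category satisfying the stated assumptions, and let all morphisms below be monomorphisms. If (b : A → D, d : D → X) is a final pullback complement of (c : B → X, a : A → B), and (b' : D → D', d' : D' → X') is a final pullback complement of (c' : X → X', d : D → X), then (b' ∘ b : A → D', d' : D' → X') is a final pullback complement of (c' ∘ c : B → X', a : A → B); i.e. vertical composition of FPC squares yields an FPC square. -/
open CategoryTheory CategoryTheory.Limits

universe v u

/-- `(b : A ⟶ D, d : D ⟶ X)` is a final pullback complement (FPC) of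
`(c : B ⟶ X, a : A ⟶ B)`. -/
def IsFPC {𝒞 : Type u} [Category.{v} 𝒞] {A B D X : 𝒞}
    (a : A ⟶ B) (c : B ⟶ X) (b : A ⟶ D) (d : D ⟶ X) : Prop :=
  IsPullback a b c d ∧
    ∀ ⦃P W : 𝒞⦄ (x : P ⟶ B) (y : P ⟶ W) (z : W ⟶ X), IsPullback x y c z →
      ∀ w : P ⟶ A, w ≫ a = x →
        ∃! ws : W ⟶ D, ws ≫ d = z ∧ y ≫ ws = w ≫ b

/-!
A final pullback complement `(D, d)` of `(c, a)` represents the functor sending `z : W ⟶ X` to the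
morphisms `c^* z ⟶ a` over `B` (whenever `c^* z` exists), so `d` plays the role of `∏_c a`. Vertical
pasting is then the identity `∏_{c'} ∏_c = ∏_{c ≫ c'}`: as `(c ≫ c')^* = c^* c'^*`, a morphism
`(c ≫ c')^* z ⟶ a` transposes first to `c'^* z ⟶ d` and then to `z ⟶ d'`.
-/

section

variable {𝒞 : Type u} [Category.{v} 𝒞] {A B D X D' X' P W : 𝒞}
  {a : A ⟶ B} {c : B ⟶ X} {b : A ⟶ D} {d : D ⟶ X}
  {c' : X ⟶ X'} {b' : D ⟶ D'} {d' : D' ⟶ X'}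

theorem exists_isPullback_of_isPullback_comp [HasPullbacksAlong c']
    {x : P ⟶ B} {y : P ⟶ W} {z : W ⟶ X'} (h : IsPullback x y (c ≫ c') z) :
    ∃ (Q : 𝒞) (l : P ⟶ Q) (p : Q ⟶ X) (q : Q ⟶ W),
      IsPullback x l c p ∧ IsPullback p q c' z ∧ l ≫ q = y := by
  have hQ : IsPullback (pullback.snd z c') (pullback.fst z c') c' z :=
    (IsPullback.of_hasPullback z c').flip
  exact ⟨_, _, _, _, IsPullback.of_bot' h hQ, hQ, hQ.lift_snd _ _ _⟩

namespace IsFPC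

theorem hom_ext (h : IsFPC a c b d) {x : P ⟶ B} {y : P ⟶ W} {f g : W ⟶ D}
    (hP : IsPullback x y c (f ≫ d)) (hd : f ≫ d = g ≫ d) (hy : y ≫ f = y ≫ g) : f = g := by
  have hw : x ≫ c = (y ≫ f) ≫ d := by rw [hP.w, Category.assoc]
  exact (h.2 x y _ hP (h.1.lift x (y ≫ f) hw) (h.1.lift_fst _ _ _)).unique
    ⟨rfl, (h.1.lift_snd _ _ _).symm⟩ ⟨hd.symm, by rw [h.1.lift_snd, hy]⟩

theorem comp_eq_of_isPullback (h : IsFPC a c b d) (h' : IsPullback d b' c' d')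
    {Q : 𝒞} {x : P ⟶ B} {l : P ⟶ Q} {u : Q ⟶ D} {v : Q ⟶ D'}
    (hP : IsPullback x l c (u ≫ d)) (hd' : u ≫ d ≫ c' = v ≫ d')
    (hl : l ≫ u ≫ b' = l ≫ v) : u ≫ b' = v := by
  have hv : (u ≫ d) ≫ c' = v ≫ d' := by rw [Category.assoc, hd']
  have hu : u = h'.lift (u ≫ d) v hv := by
    refine h.hom_ext hP (h'.lift_fst _ _ _).symm (h'.hom_ext ?_ ?_)
    · simp only [Category.assoc, h'.lift_fst]
    · simp only [Category.assoc, h'.lift_snd, hl]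
  rw [hu, h'.lift_snd]

end IsFPC

theorem fpc_vertical_pasting_general [HasPullbacksAlong c']
    (h₁ : IsFPC a c b d) (h₂ : IsFPC d c' b' d') :
    IsFPC a (c ≫ c') (b ≫ b') d' := by
  refine ⟨h₁.1.paste_vert h₂.1, fun P W x y z hP w hw => ?_⟩
  obtain ⟨Q, l, p, q, hPQ, hQ, rfl⟩ := exists_isPullback_of_isPullback_comp hP
  obtain ⟨u, ⟨rfl, hlu⟩, -⟩ := h₁.2 x l p hPQ w hw
  have transpose_iff (f : W ⟶ D') (hf : f ≫ d' = z) :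
      q ≫ f = u ≫ b' ↔ (l ≫ q) ≫ f = w ≫ b ≫ b' := by
    rw [← reassoc_of% hlu, Category.assoc]
    refine ⟨fun h => by rw [h], fun h => (h₁.comp_eq_of_isPullback h₂.1 hPQ ?_ h.symm).symm⟩
    rw [Category.assoc, hf, ← hQ.w, Category.assoc]
  exact (existsUnique_congr fun f => and_congr_right (transpose_iff f)).mp
    (h₂.2 (u ≫ d) q z hQ u rfl)

end

/-- **Vertical composition of FPC squares.** For monomorphisms throughout, if
`(b, d)` is an FPC of `(c, a)` and `(b', d')` is an FPC of `(c', d)`, then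
`(b ≫ b', d')` is an FPC of `(c ≫ c', a)`. -/
theorem fpc_vertical_pasting
    {𝒞 : Type u} [Category.{v} 𝒞] [Adhesive 𝒞]
    [HasInitial 𝒞] [HasStrictInitialObjects 𝒞] [InitialMonoClass 𝒞]
    (hfact : HasEpiMonoFact 𝒞) (hfin : Finitary 𝒞)
    {A B D X D' X' : 𝒞}
    (a : A ⟶ B) (c : B ⟶ X) (b : A ⟶ D) (d : D ⟶ X)
    (c' : X ⟶ X') (b' : D ⟶ D') (d' : D' ⟶ X')
    [Mono a] [Mono c] [Mono b] [Mono d] [Mono c'] [Mono b'] [Mono d']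
    (h1 : IsFPC a c b d) (h2 : IsFPC d c' b' d') :
    IsFPC a (c ≫ c') (b ≫ b') d' := by
  have : HasPullbacksAlong c' := fun z => hasPullback_symmetry c' z
  exact fpc_vertical_pasting_general h1 h2
end

section
/- Let C be a category satisfying the stated assumptions. If a : K → I is a monomorphism, k : K → D is a morphism, and (f : I → P, g : D → P) is a pushout of the span (a, k) (so that f ∘ a = g ∘ k is a pushout square along the monomorphism a), then (k : K → D, g : D → P) is a final pullback complement of (f : I → P, a : K → I); i.e. pushout squares along monomorphisms are final pullback complements. -/
open CategoryTheory CategoryTheory.Limits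

universe v u

/-!
Let `(f, g)` be a van Kampen pushout of `(a, k)` with `a` a monomorphism, and let `z : W ⟶ P`. If
the pullback of `z` along `f` factors through `a`, then pulling the whole pushout back along `z`
turns `a` into an identity, and hence its pushout, the pullback of `g` along `z`, into an
isomorphism. The inverse of the latter factors `z` through `g`. As `g` is a monomorphism, this
factorization is unique and compatible with the rest of the diagram.
-/

section

variable {𝒞 : Type u} [Category.{v} 𝒞]

theorem IsFPC.of_mono {A B D X : 𝒞} {a : A ⟶ B} {c : B ⟶ X} {b : A ⟶ D} {d : D ⟶ X} [Mono d]
    (sq : IsPullback a b c d)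
    (exists_lift : ∀ ⦃Q W : 𝒞⦄ (y : Q ⟶ W) (z : W ⟶ X) (w : Q ⟶ A),
      IsPullback (w ≫ a) y c z → ∃ l : W ⟶ D, l ≫ d = z) :
    IsFPC a c b d := by
  refine ⟨sq, ?_⟩
  rintro Q W _ y z hQ w rfl
  obtain ⟨l, rfl⟩ := exists_lift y z w hQ
  refine ⟨l, ⟨rfl, ?_⟩, fun l' hl' ↦ (cancel_mono d).1 hl'.1⟩
  rw [← cancel_mono d, Category.assoc, Category.assoc, ← hQ.w, Category.assoc, sq.w]

variable {K I D P : 𝒞} {a : K ⟶ I} {k : K ⟶ D} {f : I ⟶ P} {g : D ⟶ P} [Mono a]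
  {hpo : IsPushout a k f g}

theorem isIso_fst_of_isVanKampen_of_isPullback (hvk : hpo.IsVanKampen)
    {Q W R : 𝒞} {y : Q ⟶ W} {z : W ⟶ P} {w : Q ⟶ K} {p : R ⟶ W} {q : R ⟶ D}
    (hQ : IsPullback (w ≫ a) y f z) (hR : IsPullback p q z g) : IsIso p := by
  have back_left : IsPullback (𝟙 Q) w (w ≫ a) a := .of_horiz_isIso_mono ⟨Category.id_comp _⟩
  have outer : IsPullback y w z (k ≫ g) := by
    simpa only [Category.id_comp, hpo.w] using back_left.paste_horiz hQ.flip
  have back_right : IsPullback (hR.lift y (w ≫ k) (by rw [outer.w, Category.assoc])) w q k :=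
    .of_right (by rwa [hR.lift_fst]) (hR.lift_snd _ _ _) hR
  have top : IsPushout (𝟙 Q) (hR.lift y (w ≫ k) _) y p :=
    (hvk _ _ _ _ _ _ _ _ back_left back_right hQ.flip.toCommSq hR.toCommSq
      ⟨by rw [Category.id_comp, hR.lift_fst]⟩).2 ⟨hQ.flip, hR⟩
  exact top.isIso_inr_of_isIso

theorem exists_comp_eq_of_isVanKampen_of_isPullback [HasPullbacksAlong g]
    (hvk : hpo.IsVanKampen) {Q W : 𝒞} {y : Q ⟶ W} {z : W ⟶ P} {w : Q ⟶ K}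
    (hQ : IsPullback (w ≫ a) y f z) : ∃ l : W ⟶ D, l ≫ g = z := by
  have : IsIso (pullback.fst z g) :=
    isIso_fst_of_isVanKampen_of_isPullback hvk hQ (.of_hasPullback z g)
  exact ⟨inv (pullback.fst z g) ≫ pullback.snd z g, by
    rw [Category.assoc, ← pullback.condition, IsIso.inv_hom_id_assoc]⟩

theorem pushout_along_mono_isFPC_general [HasPullbacksAlong g] (hvk : hpo.IsVanKampen) :
    IsFPC a f k g :=
  have : Mono g := hvk.mono_of_mono_left
  .of_mono hvk.isPullback_of_mono_left fun _ _ _ _ _ ↦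
    exists_comp_eq_of_isVanKampen_of_isPullback hvk

end

/-- **Pushout squares along monomorphisms are final pullback complements.** If
`a : K ⟶ I` is a monomorphism, `k : K ⟶ D` a morphism, and `(f : I ⟶ P, g : D ⟶ P)`
is a pushout of `(a, k)`, then `(k, g)` is an FPC of `(f, a)`. -/
theorem pushout_along_mono_isFPC
    {𝒞 : Type u} [Category.{v} 𝒞] [Adhesive 𝒞]
    [HasInitial 𝒞] [HasStrictInitialObjects 𝒞] [InitialMonoClass 𝒞]
    (hfact : HasEpiMonoFact 𝒞) (hfin : Finitary 𝒞)
    {K I D P : 𝒞}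
    (a : K ⟶ I) [Mono a] (k : K ⟶ D)
    (f : I ⟶ P) (g : D ⟶ P) (hpo : IsPushout a k f g) :
    IsFPC a f k g := by
  have : Mono g := Adhesive.mono_of_isPushout_of_mono_left hpo
  have : HasPullbacksAlong g := fun z ↦ hasPullback_symmetry g z
  exact pushout_along_mono_isFPC_general (Adhesive.van_kampen hpo)
end

section
/- Let C be a category satisfying the stated assumptions, and let a : K → I and c : I → X be monomorphisms with final pullback complement (b : K → D, d : D → X), where b and d are monomorphisms. Suppose further that u : D → D' is a monomorphism and (c' : X → X', d'' : D' → X') is a pushout of the span (d : D → X, u : D → D'). Then (u ∘ b : K → D', d'' : D' → X') is a final pullback complement of (c' ∘ c : I → X', a : K → I); i.e. vertically composing an FPC square with a pushout square along a monomorphism yields an FPC square. -/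
open CategoryTheory CategoryTheory.Limits

universe v u

/-!
The monomorphism `d''` makes being a final pullback complement a matter of existence only: every `z`
whose pullback along `c ≫ c'` factors through `a` must factor through `d''`. To see that it does,
pull the van Kampen pushout back along `z`. The FPC property of the given square makes the pullback
of `z` along `c'` factor through `d`, so the pulled-back `d` is a monomorphism with a section, hence
an isomorphism. Isomorphisms are stable under pushout, so the pulled-back `d''` is one too.
-/

section

variable {𝒞 : Type u} [Category.{v} 𝒞]

instance hasPullback_of_mono_right [Adhesive 𝒞] {X Y Z : 𝒞} (f : X ⟶ Z) (g : Y ⟶ Z) [Mono g] :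
    HasPullback f g :=
  hasPullback_symmetry g f

theorem isFPC_iff_of_mono {A B D X : 𝒞} {a : A ⟶ B} {c : B ⟶ X} {b : A ⟶ D} {d : D ⟶ X}
    [Mono d] :
    IsFPC a c b d ↔ IsPullback a b c d ∧
      ∀ ⦃P W : 𝒞⦄ (w : P ⟶ A) (y : P ⟶ W) (z : W ⟶ X), IsPullback (w ≫ a) y c z →
        ∃ t : W ⟶ D, t ≫ d = z := by
  refine and_congr_right fun hpb => ⟨fun h P W w y z hP => ?_, ?_⟩
  · obtain ⟨t, ⟨ht, -⟩, -⟩ := h _ y z hP w rfl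
    exact ⟨t, ht⟩
  · rintro h P W _ y z hP w rfl
    obtain ⟨t, rfl⟩ := h w y z hP
    have hyt : y ≫ t = w ≫ b := by
      rw [← cancel_mono d, Category.assoc, Category.assoc, ← hP.w, Category.assoc, hpb.w]
    exact ⟨t, ⟨rfl, hyt⟩, fun t' ht' => (cancel_mono d).1 ht'.1⟩

theorem exists_comp_inr_eq_of_isVanKampen {D X D' X' Q W : 𝒞} {d : D ⟶ X} [Mono d] {u : D ⟶ D'}
    {c' : X ⟶ X'} {d'' : D' ⟶ X'} {hpo : IsPushout d u c' d''} (hvk : hpo.IsVanKampen)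
    {p : Q ⟶ X} {q : Q ⟶ W} {z : W ⟶ X'} [HasPullback z d''] (hQ : IsPullback p q c' z)
    {s : Q ⟶ D} (hs : s ≫ d = p) : ∃ t : W ⟶ D', t ≫ d'' = z := by
  have hsq : IsPullback (𝟙 Q) s p d := .of_horiz_isIso_mono ⟨by rw [Category.id_comp, hs]⟩
  have : HasPullback p d := hsq.hasPullback
  obtain ⟨E, d₁, u₁, v, hd₁, -, hpo₁⟩ :=
    hvk.exists_cube_filling hQ.flip (IsPullback.of_hasPullback z d'')
  have : IsIso d₁ := hd₁.isoIsPullback_hom_fst _ _ hsq ▸ inferInstance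
  have : IsIso (pullback.fst z d'') := hpo₁.isIso_inr_of_isIso
  exact ⟨inv (pullback.fst z d'') ≫ pullback.snd z d'', by
    rw [Category.assoc, ← pullback.condition, IsIso.inv_hom_id_assoc]⟩

theorem fpc_comp_pushout_isFPC_general {K I D X D' X' : 𝒞} {a : K ⟶ I} {c : I ⟶ X}
    {b : K ⟶ D} {d : D ⟶ X} [Mono d] (hfpc : IsFPC a c b d) {u : D ⟶ D'} {c' : X ⟶ X'}
    {d'' : D' ⟶ X'} [HasPullbacksAlong c'] [HasPullbacksAlong d'']
    {hpo : IsPushout d u c' d''} (hvk : hpo.IsVanKampen) :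
    IsFPC a (c ≫ c') (b ≫ u) d'' := by
  have : Mono d'' := hvk.mono_of_mono_left
  rw [isFPC_iff_of_mono] at hfpc ⊢
  obtain ⟨hpb, hlift⟩ := hfpc
  refine ⟨hpb.paste_vert hvk.isPullback_of_mono_left, fun P W w y z hP => ?_⟩
  have hQ := (IsPullback.of_hasPullback z c').flip
  obtain ⟨s, hs⟩ := hlift w _ _ (hP.of_bot' hQ)
  exact exists_comp_inr_eq_of_isVanKampen hvk hQ hs

end

/-- **Vertically composing an FPC square with a pushout square along a monomorphism
yields an FPC square.** If `(b, d)` is an FPC of `(c, a)` (with `a`, `c`, `b`, `d`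
monomorphisms), `u : D ⟶ D'` is a monomorphism, and `(c' : X ⟶ X', d'' : D' ⟶ X')`
is a pushout of `(d, u)`, then `(b ≫ u, d'')` is an FPC of `(c ≫ c', a)`. -/
theorem fpc_comp_pushout_isFPC
    {𝒞 : Type u} [Category.{v} 𝒞] [Adhesive 𝒞]
    [HasInitial 𝒞] [HasStrictInitialObjects 𝒞] [InitialMonoClass 𝒞]
    (hfact : HasEpiMonoFact 𝒞) (hfin : Finitary 𝒞)
    {K I D X D' X' : 𝒞}
    (a : K ⟶ I) (c : I ⟶ X) [Mono a] [Mono c]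
    (b : K ⟶ D) (d : D ⟶ X) [Mono b] [Mono d]
    (hfpc : IsFPC a c b d)
    (u : D ⟶ D') [Mono u]
    (c' : X ⟶ X') (d'' : D' ⟶ X') (hpo : IsPushout d u c' d'') :
    IsFPC a (c ≫ c') (b ≫ u) d'' := by
  have : Mono c' := Adhesive.mono_of_isPushout_of_mono_right hpo
  have : Mono d'' := Adhesive.mono_of_isPushout_of_mono_left hpo
  exact fpc_comp_pushout_isFPC_general hfpc (Adhesive.van_kampen hpo)
end

section
/- (Concurrency theorem for DPO rewriting, synthesis direction, rules without application conditions.) Let C be a category satisfying the stated assumptions, let r1 = (O1 ←o1— K1 —i1→ I1) and r2 = (O2 ←o2— K2 —i2→ I2) be linear rules in C, let m1 : I1 → X0 be a DPO-admissible match with derivation X1 = (r1)_{m1}(X0) and comatch m1* : O1 → X1, and let m2 : I2 → X1 be a DPO-admissible match with derivation X2 = (r2)_{m2}(X1). Let M21 be the pullback of the cospan (m2 : I2 → X1, m1* : O1 → X1) and let μ21 = (I2 ← M21 → O1) be the induced span of monomorphisms. Then μ21 is a DPO-admissible match of r2 into r1, and there exists a DPO-admissible match m21 : I21 → X0 for the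 composite rule r21 = r2 ▷[μ21] r1 such that (r21)_{m21}(X0) is isomorphic to X2. -/
open CategoryTheory CategoryTheory.Limits

universe v u

/-- A linear rule: a span `O ⟵o— K —i⟶ I` of monomorphisms. -/
structure Rule (𝒞 : Type u) [Category.{v} 𝒞] where
  O : 𝒞
  K : 𝒞
  I : 𝒞
  o : K ⟶ O
  i : K ⟶ I
  mono_o : Mono o
  mono_i : Mono i

/-- The data of a DPO direct derivation applying the linear rule `(O ⟵o— K —i⟶ I)`
to an object `X` along the match `m : I ⟶ X`: a pushout complement `(D, k, d)` for
`(i, m)` together with the pushout `Y` of `(o, k)`, with comatch `ms : O ⟶ Y`. -/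
structure DerivData {𝒞 : Type u} [Category.{v} 𝒞] {O K I X : 𝒞}
    (o : K ⟶ O) (i : K ⟶ I) (m : I ⟶ X) where
  D : 𝒞
  k : K ⟶ D
  d : D ⟶ X
  poc : IsPushout i k m d
  Y : 𝒞
  ms : O ⟶ Y
  ds : D ⟶ Y
  po : IsPushout o k ms ds

/-- The data witnessing that the span `μ21 = (I2 ⟵p2— M —p1⟶ O1)` of monomorphisms
is a DPO-admissible match of the rule `r2` into the rule `r1`, together with the
construction of the DPO composite rule `r2 ▷[μ21] r1`: the pushout `N` of `μ21`, a
pushout complement `K2b` for `(r2.i, n2)` with pushout `O21` of `(r2.o, k2)`, a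
pushout complement `K1b` for `(r1.o, n1)` with pushout `I21` of `(r1.i, k1)`, and the
pullback `K21` of `(w2, w1)`; the composite rule is the span of monomorphisms
`O21 ⟵ K21 ⟶ I21` with legs `q2 ≫ v2` and `q1 ≫ v1`. -/
structure CompData {𝒞 : Type u} [Category.{v} 𝒞] (r2 r1 : Rule 𝒞)
    (M : 𝒞) (p2 : M ⟶ r2.I) (p1 : M ⟶ r1.O) where
  mono_p2 : Mono p2
  mono_p1 : Mono p1
  N : 𝒞
  n2 : r2.I ⟶ N
  n1 : r1.O ⟶ N
  poN : IsPushout p2 p1 n2 n1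
  mono_n2 : Mono n2
  mono_n1 : Mono n1
  K2b : 𝒞
  k2 : r2.K ⟶ K2b
  w2 : K2b ⟶ N
  poc2 : IsPushout r2.i k2 n2 w2
  O21 : 𝒞
  c2 : r2.O ⟶ O21
  v2 : K2b ⟶ O21
  poO : IsPushout r2.o k2 c2 v2
  K1b : 𝒞
  k1 : r1.K ⟶ K1b
  w1 : K1b ⟶ N
  poc1 : IsPushout r1.o k1 n1 w1
  I21 : 𝒞
  c1 : r1.I ⟶ I21
  v1 : K1b ⟶ I21
  poI : IsPushout r1.i k1 c1 v1
  K21 : 𝒞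
  q2 : K21 ⟶ K2b
  q1 : K21 ⟶ K1b
  pbK : IsPullback q2 q1 w2 w1
  mono_oleg : Mono (q2 ≫ v2)
  mono_ileg : Mono (q1 ≫ v1)

/-- The DPO composite rule `r2 ▷[μ21] r1` extracted from composition data. -/
def CompData.rule {𝒞 : Type u} [Category.{v} 𝒞] {r2 r1 : Rule 𝒞}
    {M : 𝒞} {p2 : M ⟶ r2.I} {p1 : M ⟶ r1.O}
    (cd : CompData r2 r1 M p2 p1) : Rule 𝒞 :=
  ⟨cd.O21, cd.K21, cd.I21, cd.q2 ≫ cd.v2, cd.q1 ≫ cd.v1, cd.mono_oleg, cd.mono_ileg⟩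

/-- Two linear rules are isomorphic as spans. -/
def RuleIso {𝒞 : Type u} [Category.{v} 𝒞] (r r' : Rule 𝒞) : Prop :=
  ∃ (φO : r.O ≅ r'.O) (φK : r.K ≅ r'.K) (φI : r.I ≅ r'.I),
    r.o ≫ φO.hom = φK.hom ≫ r'.o ∧ r.i ≫ φI.hom = φK.hom ≫ r'.i

/-! Glue `r2.I` and `r1.O` along `M21` to get `N`. In an adhesive category the union of two
subobjects is their pushout over the intersection, so the induced map `n : N ⟶ X1` is mono. By the
van Kampen property, the two derivations meeting in `X1` (the first one read backwards) restrict
along `n` to derivations on `N`, whose pushout complements are the pullbacks of the given ones.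
Cancelling these restrictions leaves two derivations that start from `X1` along the common match
`n` and apply the two halves of the composite rule. The pullback of their contexts over `X1` is,
again by the van Kampen property, the context of a derivation of the composite rule. -/

section

variable {𝒞 : Type u} [Category.{v} 𝒞] [Adhesive 𝒞]

theorem isPushout_of_isPullback_of_mono {W X Y Z W' X' Y' Z' : 𝒞}
    {f : W ⟶ X} {g : W ⟶ Y} {h : X ⟶ Z} {i : Y ⟶ Z} [Mono f] (H : IsPushout f g h i)
    {f' : W' ⟶ X'} {g' : W' ⟶ Y'} {h' : X' ⟶ Z'} {i' : Y' ⟶ Z'}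
    {αW : W' ⟶ W} {αX : X' ⟶ X} {αY : Y' ⟶ Y} {αZ : Z' ⟶ Z}
    (hf : IsPullback f' αW αX f) (hh : IsPullback h' αX αZ h) (hi : IsPullback i' αY αZ i)
    (w : f' ≫ h' = g' ≫ i') : IsPushout f' g' h' i' := by
  have : Mono i := Adhesive.mono_of_isPushout_of_mono_left H
  have hgw : g' ≫ αY = αW ≫ g := by
    simp only [← cancel_mono i, Category.assoc, ← hi.w, ← reassoc_of% w, hh.w, ← H.w,
      reassoc_of% hf.w]
  have hg : IsPullback g' αW αY g := by
    refine .of_right ?_ hgw hi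
    rw [← w, ← H.w]
    exact hf.paste_horiz hh
  exact (Adhesive.van_kampen H _ _ _ _ _ _ _ _ hf hg hh.toCommSq hi.toCommSq ⟨w⟩).2 ⟨hh, hi⟩

theorem mono_desc_of_isPullback {A B M N Z : 𝒞} {a : A ⟶ Z} {b : B ⟶ Z} [Mono a] [Mono b]
    {p : M ⟶ A} {q : M ⟶ B} {inl : A ⟶ N} {inr : B ⟶ N}
    (hM : IsPullback p q a b) (hN : IsPushout p q inl inr) : Mono (hN.desc a b hM.w) := by
  have hN' : IsPushout (pullback.fst a b) (pullback.snd a b) inl inr :=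
    hN.of_iso hM.isoPullback (.refl _) (.refl _) (.refl _) (by simp) (by simp) (by simp) (by simp)
  have hdesc : hN.desc a b hM.w = hN'.isoPushout.hom ≫ pushout.desc a b pullback.condition :=
    hN.hom_ext (by simp [pushout.inl_desc]) (by simp [pushout.inr_desc])
  rw [hdesc]
  infer_instance

end

namespace DerivData

variable {𝒞 : Type u} [Category.{v} 𝒞] {O K I X : 𝒞} {o : K ⟶ O} {i : K ⟶ I} {m : I ⟶ X}

/-- The derivation of the reverse rule along the comatch, which leads back from `Y` to `X`. -/
def reverse (d : DerivData o i m) : DerivData i o d.ms where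
  D := d.D
  k := d.k
  d := d.ds
  poc := d.po
  Y := X
  ms := m
  ds := d.d
  po := d.poc

variable [Adhesive 𝒞]

instance mono_d [Mono i] (d : DerivData o i m) : Mono d.d :=
  Adhesive.mono_of_isPushout_of_mono_left d.poc

instance mono_ds [Mono o] (d : DerivData o i m) : Mono d.ds :=
  Adhesive.mono_of_isPushout_of_mono_left d.po

theorem isPullback_poc [Mono i] (d : DerivData o i m) : IsPullback i d.k m d.d :=
  Adhesive.isPullback_of_isPushout_of_mono_left d.poc

instance mono_ms [Mono i] [Mono m] (d : DerivData o i m) : Mono d.ms :=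
  have : Mono d.k := d.isPullback_poc.mono_snd_of_mono
  Adhesive.mono_of_isPushout_of_mono_right d.po

section Restriction

variable [Mono o] [Mono i] {N : 𝒞}

/-- The restriction of a derivation along a monomorphism `n` through which its match factors:
the same rule is applied to `N`, with context the pullback of the original context along `n`. -/
noncomputable def restrict (d : DerivData o i m) (n' : I ⟶ N) (n : N ⟶ X) [Mono n]
    (h : n' ≫ n = m) : DerivData o i n' where
  D := pullback n d.d
  k := pullback.lift (i ≫ n') d.k (by simp [h, d.poc.w])
  d := pullback.fst n d.d
  poc := isPushout_of_isPullback_of_mono d.poc .of_id_snd (.of_vert_isIso_mono ⟨by simp [h]⟩)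
    (.of_hasPullback n d.d) (pullback.lift_fst ..).symm
  Y := pushout o (pullback.lift (i ≫ n') d.k (by simp [h, d.poc.w]))
  ms := pushout.inl _ _
  ds := pushout.inr _ _
  po := .of_hasPushout _ _

/-- What is left of a derivation once its restriction along `n` has been split off: the span of
objects produced by the restriction is applied along `n`, with the context and the result of the
original derivation. -/
noncomputable def residual (d : DerivData o i m) (n' : I ⟶ N) (n : N ⟶ X) [Mono n]
    (h : n' ≫ n = m) : DerivData (d.restrict n' n h).ds (d.restrict n' n h).d n where
  D := d.D
  k := pullback.snd n d.d
  d := d.d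
  poc := .of_top (by simpa [restrict, h, pullback.lift_snd] using d.poc) pullback.condition
    (d.restrict n' n h).poc
  Y := d.Y
  ms := (d.restrict n' n h).po.desc d.ms (pullback.snd n d.d ≫ d.ds)
    (by simp [restrict, pullback.lift_snd_assoc, d.po.w])
  ds := d.ds
  po := .of_top (by simpa [restrict, pullback.lift_snd] using d.po) (by simp) (d.restrict n' n h).po

end Restriction

/-- Two derivations from `X` along the same match `n` compose, through `X`, to a derivation from
the result of `f₁` to the result of `f₂`; its rule is the composite of the reverse of the span of
`f₁` with the span of `f₂`. -/
noncomputable def comp {N O₁ O₂ K₁ K₂ K₂₁ : 𝒞} {n : N ⟶ X}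
    {v₁ : K₁ ⟶ O₁} {w₁ : K₁ ⟶ N} {v₂ : K₂ ⟶ O₂} {w₂ : K₂ ⟶ N} [Mono w₁] [Mono w₂]
    (f₂ : DerivData v₂ w₂ n) (f₁ : DerivData v₁ w₁ n)
    {q₂ : K₂₁ ⟶ K₂} {q₁ : K₂₁ ⟶ K₁} (hq : IsPullback q₂ q₁ w₂ w₁) :
    DerivData (q₂ ≫ v₂) (q₁ ≫ v₁) f₁.ms where
  D := pullback f₂.d f₁.d
  k := pullback.lift (q₂ ≫ f₂.k) (q₁ ≫ f₁.k)
    (by simp only [Category.assoc, ← f₂.poc.w, ← f₁.poc.w, reassoc_of% hq.w])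
  d := pullback.snd f₂.d f₁.d ≫ f₁.ds
  poc := (isPushout_of_isPullback_of_mono f₂.poc hq.flip f₁.isPullback_poc.flip
    (.flip (.of_hasPullback f₂.d f₁.d)) (pullback.lift_snd ..).symm).paste_horiz f₁.po
  Y := f₂.Y
  ms := f₂.ms
  ds := pullback.fst f₂.d f₁.d ≫ f₂.ds
  po := (isPushout_of_isPullback_of_mono f₁.poc hq f₂.isPullback_poc.flip
    (.of_hasPullback f₂.d f₁.d) (pullback.lift_fst ..).symm).paste_horiz f₂.po

end DerivData

attribute [instance] Rule.mono_o Rule.mono_i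

/-- The composition data whose two pushout complements are the contexts of a derivation of `r2`
along `n2` and of a derivation of the reverse of `r1` along `n1`. -/
noncomputable def CompData.ofDerivData {𝒞 : Type u} [Category.{v} 𝒞] [Adhesive 𝒞]
    {r2 r1 : Rule 𝒞} {M N : 𝒞} {p2 : M ⟶ r2.I} {p1 : M ⟶ r1.O} [Mono p2] [Mono p1]
    {n2 : r2.I ⟶ N} {n1 : r1.O ⟶ N} (poN : IsPushout p2 p1 n2 n1)
    (e2 : DerivData r2.o r2.i n2) (e1 : DerivData r1.i r1.o n1) : CompData r2 r1 M p2 p1 where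
  mono_p2 := inferInstance
  mono_p1 := inferInstance
  N := N
  n2 := n2
  n1 := n1
  poN := poN
  mono_n2 := Adhesive.mono_of_isPushout_of_mono_right poN
  mono_n1 := Adhesive.mono_of_isPushout_of_mono_left poN
  K2b := e2.D
  k2 := e2.k
  w2 := e2.d
  poc2 := e2.poc
  O21 := e2.Y
  c2 := e2.ms
  v2 := e2.ds
  poO := e2.po
  K1b := e1.D
  k1 := e1.k
  w1 := e1.d
  poc1 := e1.poc
  I21 := e1.Y
  c1 := e1.ms
  v1 := e1.ds
  poI := e1.po
  K21 := pullback e2.d e1.d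
  q2 := pullback.fst e2.d e1.d
  q1 := pullback.snd e2.d e1.d
  pbK := .of_hasPullback e2.d e1.d
  mono_oleg := inferInstance
  mono_ileg := inferInstance

theorem dpo_concurrency_synthesis_general
    {𝒞 : Type u} [Category.{v} 𝒞] [Adhesive 𝒞]
    (r1 r2 : Rule 𝒞)
    {X0 : 𝒞} (m1 : r1.I ⟶ X0) [Mono m1] (d1 : DerivData r1.o r1.i m1)
    (m2 : r2.I ⟶ d1.Y) [Mono m2] (d2 : DerivData r2.o r2.i m2)
    {M21 : 𝒞} (p2 : M21 ⟶ r2.I) (p1 : M21 ⟶ r1.O)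
    (hpb : IsPullback p2 p1 m2 d1.ms) :
    ∃ (cd : CompData r2 r1 M21 p2 p1) (m21 : cd.I21 ⟶ X0),
      Mono m21 ∧
        ∃ dd : DerivData (cd.q2 ≫ cd.v2) (cd.q1 ≫ cd.v1) m21,
          Nonempty (dd.Y ≅ d2.Y) := by
  have : Mono p2 := hpb.mono_fst_of_mono
  have : Mono p1 := hpb.mono_snd_of_mono
  have poN : IsPushout p2 p1 (pushout.inl p2 p1) (pushout.inr p2 p1) := .of_hasPushout p2 p1
  let n := poN.desc m2 d1.ms hpb.w
  have : Mono n := mono_desc_of_isPullback hpb poN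
  have hn2 : pushout.inl p2 p1 ≫ n = m2 := poN.inl_desc ..
  have hn1 : pushout.inr p2 p1 ≫ n = d1.ms := poN.inr_desc ..
  let cd : CompData r2 r1 M21 p2 p1 :=
    .ofDerivData poN (d2.restrict _ n hn2) (d1.reverse.restrict _ n hn1)
  let f2 := d2.residual _ n hn2
  let f1 := d1.reverse.residual _ n hn1
  exact ⟨cd, f1.ms, f1.mono_ms, f2.comp f1 cd.pbK, ⟨Iso.refl _⟩⟩

/-- **Concurrency theorem (synthesis direction, DPO, rules without conditions).** -/
theorem dpo_concurrency_synthesis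
    {𝒞 : Type u} [Category.{v} 𝒞] [Adhesive 𝒞]
    [HasInitial 𝒞] [HasStrictInitialObjects 𝒞] [InitialMonoClass 𝒞]
    (hfact : HasEpiMonoFact 𝒞) (hfin : Finitary 𝒞)
    (r1 r2 : Rule 𝒞)
    {X0 : 𝒞} (m1 : r1.I ⟶ X0) [Mono m1] (d1 : DerivData r1.o r1.i m1)
    (m2 : r2.I ⟶ d1.Y) [Mono m2] (d2 : DerivData r2.o r2.i m2)
    {M21 : 𝒞} (p2 : M21 ⟶ r2.I) (p1 : M21 ⟶ r1.O)
    (hpb : IsPullback p2 p1 m2 d1.ms) :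
    ∃ (cd : CompData r2 r1 M21 p2 p1) (m21 : cd.I21 ⟶ X0),
      Mono m21 ∧
        ∃ dd : DerivData (cd.q2 ≫ cd.v2) (cd.q1 ≫ cd.v1) m21,
          Nonempty (dd.Y ≅ d2.Y) :=
  dpo_concurrency_synthesis_general r1 r2 m1 d1 m2 d2 p2 p1 hpb
end

section
/- (Concurrency theorem for DPO rewriting, analysis direction, rules without application conditions.) Let C be a category satisfying the stated assumptions, let r1 and r2 be linear rules in C, let μ21 = (I2 ← M21 → O1) be a DPO-admissible match of r2 into r1 with composite rule r21 = r2 ▷[μ21] r1 (a span from O21 to I21), and let m21 : I21 → X0 be a DPO-admissible match for r21. Then there exist a DPO-admissible match m1 : I1 → X0 for r1 and a DPO-admissible match m2 : I2 → X1 for r2, where X1 = (r1)_{m1}(X0), such that (r2)_{m2}(X1) is isomorphic to (r21)_{m21}(X0). -/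
open CategoryTheory CategoryTheory.Limits

universe v u

/-!
Let `D` be the context object in the derivation of the composite rule, let `D1` and `D2` be the
pushouts of `D` along `K21 ⟶ K1b` and `K21 ⟶ K2b`, and let `X1` be the pushout of `D1` along
`K1b ⟶ N`. By commutativity of the square over `N`, the composite `K21 ⟶ K2b ⟶ N` also pushes `D`
out to `X1`. Cancelling the squares that define `D1` and `D2` from the pushouts `X0`, `X1` and `Y`
of `D` leaves a derivation of `N ⟵ K1b ⟶ I21` from `X0` to `X1`, followed by one of
`O21 ⟵ K2b ⟶ N` from `X1` to `Y`. These two spans are themselves pushouts of `r1` and `r2`, so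
pasting turns the two derivations into derivations of `r1` and `r2`.
-/

section Adhesive

variable {𝒞 : Type u} [Category.{v} 𝒞] [Adhesive 𝒞] {O K I D X Y : 𝒞} {o : K ⟶ O} {i : K ⟶ I}
  {k : K ⟶ D} {m : I ⟶ X} {d : D ⟶ X} {ms : O ⟶ Y} {ds : D ⟶ Y} [Mono i] [Mono m]

theorem mono_of_isPushoutComplement (poc : IsPushout i k m d) : Mono k :=
  (Adhesive.isPullback_of_isPushout_of_mono_left poc).mono_snd_of_mono

theorem mono_comatch (poc : IsPushout i k m d) (po : IsPushout o k ms ds) : Mono ms :=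
  have := mono_of_isPushoutComplement poc
  Adhesive.mono_of_isPushout_of_mono_right po

end Adhesive

namespace DerivData

variable {𝒞 : Type u} [Category.{v} 𝒞]

/-- The derivation of a rule `O ⟵o— K —i⟶ I` underlying a derivation of a span `O' ⟵ K' ⟶ I'`
obtained from the rule by pushing out along `k : K ⟶ K'`. It has the same source and target. -/
def ofIsPushout {O K I O' K' I' X : 𝒞} {o : K ⟶ O} {i : K ⟶ I} {k : K ⟶ K'}
    {o' : K' ⟶ O'} {i' : K' ⟶ I'} {a : O ⟶ O'} {b : I ⟶ I'} {m : I' ⟶ X}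
    (dd : DerivData o' i' m) (ho : IsPushout o k a o') (hi : IsPushout i k b i') :
    DerivData o i (b ≫ m) where
  D := dd.D
  k := k ≫ dd.k
  d := dd.d
  poc := hi.paste_vert dd.poc
  Y := dd.Y
  ms := a ≫ dd.ms
  ds := dd.ds
  po := ho.paste_vert dd.po

variable {K K₁ K₂ N O I X : 𝒞} {q₁ : K ⟶ K₁} {q₂ : K ⟶ K₂} {v₁ : K₁ ⟶ I} {v₂ : K₂ ⟶ O}
  {m : I ⟶ X}

/-- The first half of a derivation of a composite span: for a span `N ⟵w₁— K₁ —v₁⟶ I` whose right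
leg is a factor of the right leg of the derived span, the derivation of `(w₁, v₁)` at the same
match. -/
noncomputable def first (dd : DerivData (q₂ ≫ v₂) (q₁ ≫ v₁) m) [HasPushout q₁ dd.k]
    (w₁ : K₁ ⟶ N) [HasPushout w₁ (pushout.inl q₁ dd.k)] : DerivData w₁ v₁ m where
  D := pushout q₁ dd.k
  k := pushout.inl q₁ dd.k
  d := (IsPushout.of_hasPushout q₁ dd.k).desc (v₁ ≫ m) dd.d (by simpa using dd.poc.w)
  poc := dd.poc.of_left' (.of_hasPushout _ _)
  Y := pushout w₁ (pushout.inl q₁ dd.k)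
  ms := pushout.inl _ _
  ds := pushout.inr _ _
  po := .of_hasPushout _ _

/-- The second half of a derivation of a composite span `O ⟵v₂— K₂ —w₂⟶ N ⟵w₁— K₁ —v₁⟶ I`: the
derivation of `(v₂, w₂)` at the comatch of the first half. It has the target of the whole
derivation. -/
noncomputable def second (dd : DerivData (q₂ ≫ v₂) (q₁ ≫ v₁) m) [HasPushout q₁ dd.k]
    [HasPushout q₂ dd.k] {w₁ : K₁ ⟶ N} {w₂ : K₂ ⟶ N} [HasPushout w₁ (pushout.inl q₁ dd.k)]
    (sq : q₂ ≫ w₂ = q₁ ≫ w₁) : DerivData v₂ w₂ (dd.first w₁).ms :=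
  have outer : IsPushout (q₂ ≫ w₂) dd.k (dd.first w₁).ms
      (pushout.inr q₁ dd.k ≫ (dd.first w₁).ds) :=
    sq ▸ (IsPushout.of_hasPushout q₁ dd.k).paste_horiz (dd.first w₁).po
  { D := pushout q₂ dd.k
    k := pushout.inl q₂ dd.k
    d := (IsPushout.of_hasPushout q₂ dd.k).desc (w₂ ≫ (dd.first w₁).ms) _
      (by simpa using outer.w)
    poc := outer.of_left' (.of_hasPushout _ _)
    Y := dd.Y
    ms := dd.ms
    ds := (IsPushout.of_hasPushout q₂ dd.k).desc (v₂ ≫ dd.ms) dd.ds (by simpa using dd.po.w)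
    po := dd.po.of_left' (.of_hasPushout _ _) }

end DerivData

attribute [instance] Rule.mono_o Rule.mono_i CompData.mono_n1 CompData.mono_n2
  CompData.mono_oleg CompData.mono_ileg

namespace CompData

variable {𝒞 : Type u} [Category.{v} 𝒞] {r2 r1 : Rule 𝒞} {M : 𝒞} {p2 : M ⟶ r2.I}
  {p1 : M ⟶ r1.O} (cd : CompData r2 r1 M p2 p1)

instance mono_q1 : Mono cd.q1 := mono_of_mono cd.q1 cd.v1

instance mono_q2 : Mono cd.q2 := mono_of_mono cd.q2 cd.v2

variable [Adhesive 𝒞]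

instance mono_v1 : Mono cd.v1 := Adhesive.mono_of_isPushout_of_mono_left cd.poI

instance mono_w1 : Mono cd.w1 := Adhesive.mono_of_isPushout_of_mono_left cd.poc1

instance mono_c1 : Mono cd.c1 := mono_comatch cd.poc1 cd.poI

end CompData

theorem dpo_concurrency_analysis_general {𝒞 : Type u} [Category.{v} 𝒞] [Adhesive 𝒞]
    {r1 r2 : Rule 𝒞} {M : 𝒞} {p2 : M ⟶ r2.I} {p1 : M ⟶ r1.O} (cd : CompData r2 r1 M p2 p1)
    {X0 : 𝒞} {m21 : cd.I21 ⟶ X0} [Mono m21]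
    (dd : DerivData (cd.q2 ≫ cd.v2) (cd.q1 ≫ cd.v1) m21) :
    ∃ (d1 : DerivData r1.o r1.i (cd.c1 ≫ m21)) (n : cd.N ⟶ d1.Y), Mono n ∧ cd.n1 ≫ n = d1.ms ∧
      ∃ (d2 : DerivData r2.o r2.i (cd.n2 ≫ n)) (φ : d2.Y ≅ dd.Y),
        d2.ms ≫ φ.hom = cd.c2 ≫ dd.ms :=
  let e1 : DerivData cd.w1 cd.v1 m21 := dd.first cd.w1
  let e2 : DerivData cd.v2 cd.w2 e1.ms := dd.second cd.pbK.w
  ⟨e1.ofIsPushout cd.poc1 cd.poI, e1.ms, mono_comatch e1.poc e1.po, rfl,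
    e2.ofIsPushout cd.poO cd.poc2, Iso.refl _, Category.comp_id _⟩

/-- **Concurrency theorem (analysis direction, DPO, rules without conditions).**
Given a DPO-admissible match `μ21` of `r2` into `r1` with composite rule
`r21 = r2 ▷[μ21] r1` and a DPO-admissible match `m21 : I21 ⟶ X0` for `r21`, there
exist a DPO-admissible match `m1` for `r1` and a DPO-admissible match `m2` for `r2`
applied to `X1 = (r1)_{m1}(X0)` such that `(r2)_{m2}(X1) ≅ (r21)_{m21}(X0)`. -/
theorem dpo_concurrency_analysis
    {𝒞 : Type u} [Category.{v} 𝒞] [Adhesive 𝒞]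
    [HasInitial 𝒞] [HasStrictInitialObjects 𝒞] [InitialMonoClass 𝒞]
    (hfact : HasEpiMonoFact 𝒞) (hfin : Finitary 𝒞)
    (r1 r2 : Rule 𝒞)
    {M : 𝒞} {p2 : M ⟶ r2.I} {p1 : M ⟶ r1.O}
    (cd : CompData r2 r1 M p2 p1)
    {X0 : 𝒞} (m21 : cd.I21 ⟶ X0) [Mono m21]
    (dd : DerivData (cd.q2 ≫ cd.v2) (cd.q1 ≫ cd.v1) m21) :
    ∃ (m1 : r1.I ⟶ X0), Mono m1 ∧
      ∃ (d1 : DerivData r1.o r1.i m1) (m2 : r2.I ⟶ d1.Y), Mono m2 ∧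
        ∃ d2 : DerivData r2.o r2.i m2, Nonempty (d2.Y ≅ dd.Y) := by
  obtain ⟨d1, n, _, _, d2, φ, _⟩ := dpo_concurrency_analysis_general cd dd
  exact ⟨cd.c1 ≫ m21, inferInstance, d1, cd.n2 ≫ n, inferInstance, d2, ⟨φ⟩⟩
end

section
/- (Associativity of DPO rule composition, first direction, rules without application conditions.) Let C be a category satisfying the stated assumptions, and let r1, r2, r3 be linear rules in C. If μ21 is a DPO-admissible match of r2 into r1 with composite r21 = r2 ▷[μ21] r1, and μ3(21) is a DPO-admissible match of r3 into r21, then there exist a DPO-admissible match μ32 of r3 into r2 and a DPO-admissible match μ(32)1 of r32 := r3 ▷[μ32] r2 into r1 such that the composite rules r3 ▷[μ3(21)] (r2 ▷[μ21] r1) and (r3 ▷[μ32] r2) ▷[μ(32)1] r1 are isomorphic as spans. -/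
open CategoryTheory CategoryTheory.Limits

universe v u

/-! An extension diagram of a derivation along `u` consists of two pushout squares. Pulling back
along a derivation (universality of pushouts) and pushing out along its context shows that a pair of
derivations extends exactly when the composite span does.

The given derivation `r₃ ▷ (r₂ ▷ r₁)` therefore unfolds to three derivations
`Y₃ ⇐ N₃ ⇐ X ⇐ Y₁`, applying `r₁`, `r₂` and `r₃` in turn. The intersection and the union of the
images of `I₃` and `O₂` in `N₃` yield the match of `r₃` into `r₂`, and `Y₃ ⇐ X` is then an
application of `r₃₂` along some `I₃₂ ⟶ X`. The images of `I₃₂` and `O₁` cover `X`, so their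
intersection is the required match of `r₃₂` into `r₁`; all three outer objects agree on the nose. -/

section Adhesive

variable {𝒞 : Type u} [Category.{v} 𝒞]

/-- The pair `f`, `g` is jointly extremally epic: no proper subobject contains both images. No joint
cancellation property is included. -/
def JointlyExtremalEpi {X Y Z : 𝒞} (f : X ⟶ Z) (g : Y ⟶ Z) : Prop :=
  ∀ ⦃J : Subobject Z⦄, J.Factors f → J.Factors g → J = ⊤

theorem factors_of_isPushout {W X Y Z T : 𝒞} {f : W ⟶ X} {g : W ⟶ Y} {h : X ⟶ Z} {i : Y ⟶ Z}
    (H : IsPushout f g h i) {J : Subobject T} {t : Z ⟶ T} (hJ : J.Factors (h ≫ t))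
    (iJ : J.Factors (i ≫ t)) : J.Factors t := by
  have compat : f ≫ J.factorThru _ hJ = g ≫ J.factorThru _ iJ := by
    simp [← cancel_mono J.arrow, H.w_assoc]
  have fac : H.desc _ _ compat ≫ J.arrow = t := H.hom_ext (by simp) (by simp)
  exact fac ▸ Subobject.factors_comp_arrow _

theorem jointlyExtremalEpi_of_isPushout {W X Y Z : 𝒞} {f : W ⟶ X} {g : W ⟶ Y} {h : X ⟶ Z}
    {i : Y ⟶ Z} (H : IsPushout f g h i) : JointlyExtremalEpi h i := fun J hJ iJ => by
  have idJ : J.Factors (𝟙 Z) := factors_of_isPushout H (by simpa) (by simpa)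
  exact top_le_iff.1 (Subobject.le_of_factors (by
    simpa using Subobject.factors_of_factors_right (⊤ : Subobject Z).arrow idJ))

theorem JointlyExtremalEpi.comp_of_isPushout {W X Y Z A T : 𝒞} {f : W ⟶ X} {g : W ⟶ Y} {h : X ⟶ Z}
    {i : Y ⟶ Z} {a : A ⟶ T} {t : Z ⟶ T} (hat : JointlyExtremalEpi a t) (H : IsPushout f g h i)
    {b : X ⟶ A} (hb : b ≫ a = h ≫ t) : JointlyExtremalEpi a (i ≫ t) := fun _ aJ iJ =>
  hat aJ (factors_of_isPushout H (hb ▸ Subobject.factors_of_factors_right b aJ) iJ)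

theorem exists_isPushout_of_comp_left {A B B' C D : 𝒞} {f : A ⟶ B} {f' : B ⟶ B'} {g : A ⟶ C}
    {h : B' ⟶ D} {i : C ⟶ D} (H : IsPushout (f ≫ f') g h i) [HasPushout f g] :
    ∃ (P : 𝒞) (a : B ⟶ P) (b : C ⟶ P) (p : P ⟶ D),
      IsPushout f g a b ∧ IsPushout f' a h p ∧ b ≫ p = i :=
  ⟨_, _, _, _, .of_hasPushout f g, .of_left' H (.of_hasPushout f g), by simp⟩

theorem exists_isPullback_of_isPullback_comp_s8 {A B C D E P Q T : 𝒞} {w : A ⟶ B} {d : C ⟶ B}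
    {d' : C ⟶ D} {e : E ⟶ D} {p : P ⟶ A} {q : P ⟶ C} {b : T ⟶ C} {b' : T ⟶ E} {t : Q ⟶ A}
    {l : Q ⟶ T} (hP : IsPullback p q w d) (hT : IsPullback b b' d' e)
    (hQ : IsPullback t l w (b ≫ d)) :
    ∃ θ : Q ⟶ P, θ ≫ p = t ∧ IsPullback θ (l ≫ b') (q ≫ d') e := by
  have comm : t ≫ w = (l ≫ b) ≫ d := by rw [hQ.w, Category.assoc]
  have top : IsPullback (hP.lift _ _ comm) l q b := .of_right (by simpa using hQ) (by simp) hP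
  exact ⟨_, by simp, top.paste_vert hT⟩

variable [Adhesive 𝒞]

theorem exists_isPullback_isPushout_of_mono {X Y Z : 𝒞} (f : X ⟶ Z) (g : Y ⟶ Z) [Mono f]
    [Mono g] :
    ∃ (P J : 𝒞) (p : P ⟶ X) (q : P ⟶ Y) (l : X ⟶ J) (r : Y ⟶ J) (j : J ⟶ Z),
      IsPullback p q f g ∧ IsPushout p q l r ∧ Mono j ∧ l ≫ j = f ∧ r ≫ j = g :=
  ⟨_, _, _, _, _, _, pushout.desc f g pullback.condition, .of_hasPullback f g,
    .of_hasPushout _ _, inferInstance, pushout.inl_desc _ _ _, pushout.inr_desc _ _ _⟩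

theorem JointlyExtremalEpi.exists_isPushout {X Y Z : 𝒞} {f : X ⟶ Z} {g : Y ⟶ Z}
    (h : JointlyExtremalEpi f g) [Mono f] [Mono g] :
    ∃ (P : 𝒞) (p : P ⟶ X) (q : P ⟶ Y), Mono p ∧ Mono q ∧ IsPushout p q f g := by
  obtain ⟨P, J, p, q, l, r, j, hP, hJ, _, rfl, rfl⟩ := exists_isPullback_isPushout_of_mono f g
  have top : Subobject.mk j = ⊤ :=
    h (Subobject.factors_of_factors_right l (Subobject.mk_factors_self j))
      (Subobject.factors_of_factors_right r (Subobject.mk_factors_self j))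
  have : IsIso j := (Subobject.isIso_iff_mk_eq_top j).2 top
  exact ⟨P, p, q, hP.mono_fst_of_mono, hP.mono_snd_of_mono,
    hJ.of_iso (.refl _) (.refl _) (.refl _) (asIso j) (by simp) (by simp) (by simp) (by simp)⟩

section PushoutSquare

variable {W X Y Z : 𝒞} {f : W ⟶ X} {g : W ⟶ Y} {h : X ⟶ Z} {i : Y ⟶ Z}

theorem isPushout_of_isPullback_faces [Mono f] (H : IsPushout f g h i) {W' X' Y' Z' : 𝒞}
    {f' : W' ⟶ X'} {g' : W' ⟶ Y'} {h' : X' ⟶ Z'} {i' : Y' ⟶ Z'} {αW : W' ⟶ W} {αX : X' ⟶ X}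
    {αY : Y' ⟶ Y} {αZ : Z' ⟶ Z} (hh : IsPullback h' αX αZ h) (hi : IsPullback i' αY αZ i)
    (hf : IsPullback f' αW αX f) (w : f' ≫ h' = g' ≫ i') (wg : g' ≫ αY = αW ≫ g) :
    IsPushout f' g' h' i' := by
  have hg : IsPullback g' αW αY g := by
    refine .of_right ?_ wg hi
    rw [← H.w, ← w]
    exact hf.paste_horiz hh
  exact (Adhesive.van_kampen H f' g' h' i' αW αX αY αZ hf hg ⟨hh.w⟩ ⟨hi.w⟩ ⟨w⟩).2 ⟨hh, hi⟩

theorem exists_isPushout_of_comp_mono [Mono f] {Z' : 𝒞} {t : X ⟶ Z'} {u : Z' ⟶ Z} [Mono u]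
    (H : IsPushout f g (t ≫ u) i) :
    ∃ (Y' : 𝒞) (g' : W ⟶ Y') (i' : Y' ⟶ Z') (s : Y' ⟶ Y),
      g' ≫ s = g ∧ IsPushout f g' t i' ∧ IsPushout i' s u i := by
  have hY : IsPullback (pullback.fst u i) (pullback.snd u i) u i := .of_hasPullback u i
  have w : (f ≫ t) ≫ u = g ≫ i := by rw [Category.assoc, H.w]
  have hX : IsPullback t (𝟙 X) u (t ≫ u) := by
    simpa using (IsPullback.of_id_snd (f := t)).paste_horiz (IsKernelPair.id_of_mono u)
  have top : IsPushout f (hY.lift _ _ w) t (pullback.fst u i) :=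
    isPushout_of_isPullback_faces H hX hY .of_id_snd (by simp) (by simp)
  exact ⟨_, hY.lift _ _ w, _, _, by simp, top, .of_top (by simpa using H) hY.w top⟩

end PushoutSquare

theorem exists_isPushout_of_isPullback_pair {N X A' A B' B K D : 𝒞} {a' : A' ⟶ N} {a : A ⟶ X}
    {b' : B' ⟶ N} {b : B ⟶ X} {s : A' ⟶ A} {r : B' ⟶ B} {u : N ⟶ X} {p' : K ⟶ A'} {q' : K ⟶ B'}
    {p : D ⟶ A} {q : D ⟶ B} [Mono a'] [Mono b'] (hA : IsPushout a' s u a)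
    (hB : IsPushout b' r u b) (hK : IsPullback p' q' a' b') (hD : IsPullback p q a b) :
    ∃ κ : K ⟶ D, IsPushout p' κ s p ∧ IsPushout q' κ r q := by
  have w : (p' ≫ s) ≫ a = (q' ≫ r) ≫ b := by
    rw [Category.assoc, Category.assoc, ← hA.w, ← hB.w, hK.w_assoc]
  have pbA := Adhesive.isPullback_of_isPushout_of_mono_left hA
  have pbB := Adhesive.isPullback_of_isPushout_of_mono_left hB
  exact ⟨hD.lift _ _ w,
    isPushout_of_isPullback_faces hB pbA.flip hD hK (by simp) (by simp),
    isPushout_of_isPullback_faces hA pbB.flip hD.flip hK.flip (by simp) (by simp)⟩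

theorem exists_isPullback_of_isPushout_pair {N X A' A B' B K D : 𝒞} {a' : A' ⟶ N} {a : A ⟶ X}
    {b' : B' ⟶ N} {s : A' ⟶ A} {r : B' ⟶ B} {u : N ⟶ X} {p' : K ⟶ A'} {q' : K ⟶ B'} {κ : K ⟶ D}
    {p : D ⟶ A} {q : D ⟶ B} [Mono a'] [Mono b'] (hA : IsPushout a' s u a)
    (hK : IsPullback p' q' a' b') (hp : IsPushout p' κ s p) (hq : IsPushout q' κ r q) :
    ∃ b : B ⟶ X, IsPushout b' r u b ∧ IsPullback p q a b := by
  have hX : IsPushout (q' ≫ b') κ u (p ≫ a) := hK.w ▸ hp.paste_horiz hA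
  have : Mono p' := hK.mono_fst_of_mono
  have hb : IsPushout b' r u (hq.desc (b' ≫ u) (p ≫ a) (by rw [← Category.assoc, hX.w])) :=
    .of_left' hX hq
  have hp' := Adhesive.isPullback_of_isPushout_of_mono_left hp
  refine ⟨_, hb, ((Adhesive.van_kampen hA q' κ r q p' b' p _ hK.flip hp'.flip
    ⟨hb.w.symm⟩ ⟨by simp⟩ ⟨hq.w⟩).1 hq).2.flip⟩

end Adhesive

section Derivation

variable {𝒞 : Type u} [Category.{v} 𝒞] {O K I X X' : 𝒞} {o : K ⟶ O} {i : K ⟶ I} {t : I ⟶ X'}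
  {m : I ⟶ X}

/-- The reverse derivation: the rule `(I ⟵i— K —o⟶ O)` applied along the comatch. -/
abbrev DerivData.reverse_s8 (e : DerivData o i m) : DerivData i o e.ms :=
  ⟨e.D, e.k, e.ds, e.po, X, m, e.d, e.poc⟩

/-- Pushing a derivation out along a morphism `s` of its context. -/
abbrev DerivData.extend (e : DerivData o i t) {D Y : 𝒞} {s : e.D ⟶ D} {u : X' ⟶ X} {d : D ⟶ X}
    {v : e.Y ⟶ Y} {ds : D ⟶ Y} (left : IsPushout e.d s u d) (right : IsPushout e.ds s v ds) :
    DerivData o i (t ≫ u) :=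
  ⟨D, e.k ≫ s, d, e.poc.paste_vert left, Y, e.ms ≫ v, ds, e.po.paste_vert right⟩

/-- An extension diagram from a derivation on `X'` to a derivation on `X` by the same rule, over
`u : X' ⟶ X`: two pushout squares sharing the morphism `s` of contexts, compatible with matches and
comatches. -/
structure Extension (e' : DerivData o i t) (e : DerivData o i m) (u : X' ⟶ X) where
  s : e'.D ⟶ e.D
  v : e'.Y ⟶ e.Y
  match_comp : t ≫ u = m
  comatch_comp : e'.ms ≫ v = e.ms
  isPushout_left : IsPushout e'.d s u e.d
  isPushout_right : IsPushout e'.ds s v e.ds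

variable [Adhesive 𝒞]

instance DerivData.mono_d_s8 [Mono i] (e : DerivData o i m) : Mono e.d :=
  Adhesive.mono_of_isPushout_of_mono_left e.poc

instance DerivData.mono_ds_s8 [Mono o] (e : DerivData o i m) : Mono e.ds :=
  e.reverse_s8.mono_d_s8

theorem DerivData.mono_ms_s8 [Mono i] [Mono m] (e : DerivData o i m) : Mono e.ms :=
  have : Mono (e.k ≫ e.d) := e.poc.w ▸ inferInstance
  have : Mono e.k := mono_of_mono e.k e.d
  Adhesive.mono_of_isPushout_of_mono_right e.po

namespace Extension

variable {e' : DerivData o i t} {e : DerivData o i m} {u : X' ⟶ X} [Mono i]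

theorem isPullback_left (E : Extension e' e u) : IsPullback e'.d E.s u e.d :=
  Adhesive.isPullback_of_isPushout_of_mono_left E.isPushout_left

theorem mono_v (E : Extension e' e u) (_ : Mono u) : Mono E.v :=
  have : Mono E.s := E.isPullback_left.mono_snd_of_mono
  Adhesive.mono_of_isPushout_of_mono_right E.isPushout_right

end Extension

theorem DerivData.exists_extension_of_comp_mono [Mono i] [Mono o] {u : X' ⟶ X} [Mono u]
    (e : DerivData o i (t ≫ u)) : ∃ e' : DerivData o i t, Nonempty (Extension e' e u) := by
  obtain ⟨D, k, d, s, hk, poc, left⟩ := exists_isPushout_of_comp_mono e.poc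
  have : HasPushout k o := hasPushout_symmetry o k
  obtain ⟨Y, ms, ds, v, po, right, hms⟩ := exists_isPushout_of_comp_left (hk ▸ e.po.flip)
  exact ⟨⟨D, k, d, poc, Y, ds, ms, po.flip⟩, ⟨⟨s, v, rfl, hms, left, right.flip⟩⟩⟩

theorem jointlyExtremalEpi_of_extensions [Mono i] {X₁ X₂ A M : 𝒞} {t₁ : I ⟶ X₁} {t₂ : I ⟶ X₂}
    {e₁ : DerivData o i t₁} {e₂ : DerivData o i t₂} {e : DerivData o i m} {u₁ : X₁ ⟶ X}
    {u₂ : X₂ ⟶ X} (E₁ : Extension e₁ e u₁) (E₂ : Extension e₂ e u₂) {p : M ⟶ A} {q : M ⟶ X₂}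
    {a : A ⟶ X₁} [Mono p] (H : IsPushout p q (a ≫ u₁) u₂) : JointlyExtremalEpi E₁.v E₂.v := by
  intro J hJ₁ hJ₂
  obtain ⟨_, _, _, _, _, _, cover⟩ := (Adhesive.van_kampen H).exists_cube_filling
    (IsPullback.of_hasPullback e.d (a ≫ u₁)) E₂.isPullback_left.flip
  have ds_factors : J.Factors e.ds := by
    refine factors_of_isPushout cover ?_ ?_
    · have w : (pullback.snd e.d (a ≫ u₁) ≫ a) ≫ u₁ = pullback.fst e.d (a ≫ u₁) ≫ e.d := by
        rw [Category.assoc, pullback.condition]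
      rw [← E₁.isPullback_left.lift_snd _ _ w, Category.assoc, ← E₁.isPushout_right.w,
        ← Category.assoc]
      exact Subobject.factors_of_factors_right _ hJ₁
    · rw [← E₂.isPushout_right.w]
      exact Subobject.factors_of_factors_right _ hJ₂
  exact jointlyExtremalEpi_of_isPushout E₂.isPushout_right hJ₂ ds_factors

end Derivation

section SequentialDerivations

variable {𝒞 : Type u} [Category.{v} 𝒞] [Adhesive 𝒞] {O₂ K₂ I₂ O₁ K₁ I₁ X X' : 𝒞} {o₂ : K₂ ⟶ O₂}
  {i₂ : K₂ ⟶ I₂} {o₁ : K₁ ⟶ O₁} {i₁ : K₁ ⟶ I₁}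

theorem exists_extension_of_isPushout_of_isPullback [Mono i₁] [Mono o₂] {K D Y : 𝒞} {t₂ : I₂ ⟶ X'}
    {e₂ : DerivData o₂ i₂ t₂} {t₁ : I₁ ⟶ e₂.Y} {e₁ : DerivData o₁ i₁ t₁} {q₂ : K ⟶ e₂.D}
    {q₁ : K ⟶ e₁.D} (hK : IsPullback q₂ q₁ e₂.ds e₁.d) {k : K ⟶ D} {u : X' ⟶ X} {d : D ⟶ X}
    {v : e₁.Y ⟶ Y} {ds : D ⟶ Y} (left : IsPushout (q₂ ≫ e₂.d) k u d)
    (right : IsPushout (q₁ ≫ e₁.ds) k v ds) :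
    ∃ (f₂ : DerivData o₂ i₂ (t₂ ≫ u)) (E₂ : Extension e₂ f₂ u) (D₁ : 𝒞) (s₁ : e₁.D ⟶ D₁)
      (d₁ : D₁ ⟶ f₂.Y) (ds₁ : D₁ ⟶ Y) (b₂ : D ⟶ f₂.D) (b₁ : D ⟶ D₁),
      IsPushout e₁.d s₁ E₂.v d₁ ∧ IsPushout e₁.ds s₁ v ds₁ ∧
      IsPullback b₂ b₁ f₂.ds d₁ ∧ b₂ ≫ f₂.d = d ∧ b₁ ≫ ds₁ = ds := by
  have : Mono q₂ := hK.mono_fst_of_mono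
  have : Mono q₁ := hK.mono_snd_of_mono
  obtain ⟨D₂, s₂, b₂, d₂, hD₂, left₂, hd⟩ := exists_isPushout_of_comp_left left
  obtain ⟨D₁, s₁, b₁, ds₁, hD₁, right₁, hds⟩ := exists_isPushout_of_comp_left right
  have right₂ := IsPushout.of_hasPushout e₂.ds s₂
  obtain ⟨d₁, left₁, hb⟩ := exists_isPullback_of_isPushout_pair right₂ hK hD₂ hD₁
  exact ⟨e₂.extend left₂ right₂, ⟨s₂, _, rfl, rfl, left₂, right₂⟩, D₁, s₁, d₁, ds₁, b₂, b₁,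
    left₁, right₁, hb, hd, hds⟩

theorem Extension.exists_isPushout_comp [Mono i₁] [Mono i₂] {K D : 𝒞} {t₂ : I₂ ⟶ X'} {m₂ : I₂ ⟶ X}
    {t₁ : I₁ ⟶ X'} {m₁ : I₁ ⟶ X} {e₂ : DerivData o₂ i₂ t₂} {f₂ : DerivData o₂ i₂ m₂}
    {e₁ : DerivData o₁ i₁ t₁} {f₁ : DerivData o₁ i₁ m₁} {u : X' ⟶ X} (E₂ : Extension e₂ f₂ u)
    (E₁ : Extension e₁ f₁ u) {q₂ : K ⟶ e₂.D} {q₁ : K ⟶ e₁.D} {p₂ : D ⟶ f₂.D} {p₁ : D ⟶ f₁.D}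
    (hK : IsPullback q₂ q₁ e₂.d e₁.d) (hD : IsPullback p₂ p₁ f₂.d f₁.d) :
    ∃ κ : K ⟶ D, IsPushout (q₂ ≫ e₂.ds) κ E₂.v (p₂ ≫ f₂.ds) ∧
      IsPushout (q₁ ≫ e₁.ds) κ E₁.v (p₁ ≫ f₁.ds) := by
  obtain ⟨κ, h₂, h₁⟩ :=
    exists_isPushout_of_isPullback_pair E₂.isPushout_left E₁.isPushout_left hK hD
  exact ⟨κ, h₂.paste_horiz E₂.isPushout_right, h₁.paste_horiz E₁.isPushout_right⟩

end SequentialDerivations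

section Composition

attribute [instance] Rule.mono_o Rule.mono_i CompData.mono_n2 CompData.mono_n1

variable {𝒞 : Type u} [Category.{v} 𝒞] {r2 r1 : Rule 𝒞} {M N : 𝒞} {p2 : M ⟶ r2.I} {p1 : M ⟶ r1.O}
  {n2 : r2.I ⟶ N} {n1 : r1.O ⟶ N}

namespace CompData

/-- The application of `r2` to the pushout `N` inside the composition `r2 ▷ r1`. -/
abbrev deriv₂ (c : CompData r2 r1 M p2 p1) : DerivData r2.o r2.i c.n2 :=
  ⟨c.K2b, c.k2, c.w2, c.poc2, c.O21, c.c2, c.v2, c.poO⟩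

/-- The application of the reverse of `r1` to the pushout `N` inside the composition `r2 ▷ r1`. -/
abbrev deriv₁ (c : CompData r2 r1 M p2 p1) : DerivData r1.i r1.o c.n1 :=
  ⟨c.K1b, c.k1, c.w1, c.poc1, c.I21, c.c1, c.v1, c.poI⟩

variable [Adhesive 𝒞]

/-- The composition data assembled from a derivation by `r2` and one by the reverse of `r1` on the
pushout of the match, together with the pullback of their contexts. -/
abbrev ofDerivs (mono_p2 : Mono p2) (mono_p1 : Mono p1) (hN : IsPushout p2 p1 n2 n1)
    (e₂ : DerivData r2.o r2.i n2) (e₁ : DerivData r1.i r1.o n1) {K : 𝒞} {q₂ : K ⟶ e₂.D}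
    {q₁ : K ⟶ e₁.D} (hK : IsPullback q₂ q₁ e₂.d e₁.d) : CompData r2 r1 M p2 p1 :=
  have : Mono q₂ := hK.mono_fst_of_mono
  have : Mono q₁ := hK.mono_snd_of_mono
  { mono_p2 := mono_p2
    mono_p1 := mono_p1
    N := N
    n2 := n2
    n1 := n1
    poN := hN
    mono_n2 := Adhesive.mono_of_isPushout_of_mono_right hN
    mono_n1 := Adhesive.mono_of_isPushout_of_mono_left hN
    K2b := e₂.D
    k2 := e₂.k
    w2 := e₂.d
    poc2 := e₂.poc
    O21 := e₂.Y
    c2 := e₂.ms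
    v2 := e₂.ds
    poO := e₂.po
    K1b := e₁.D
    k1 := e₁.k
    w1 := e₁.d
    poc1 := e₁.poc
    I21 := e₁.Y
    c1 := e₁.ms
    v1 := e₁.ds
    poI := e₁.po
    K21 := K
    q2 := q₂
    q1 := q₁
    pbK := hK
    mono_oleg := mono_comp _ _
    mono_ileg := mono_comp _ _ }

end CompData

variable [Adhesive 𝒞]

theorem exists_compData_extension [Mono n2] [Mono n1] (e₂ : DerivData r2.o r2.i n2)
    (e₁ : DerivData r1.i r1.o n1) :
    ∃ (M : 𝒞) (p2 : M ⟶ r2.I) (p1 : M ⟶ r1.O) (c : CompData r2 r1 M p2 p1) (u : c.N ⟶ N)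
      (_ : Extension c.deriv₂ e₂ u) (_ : Extension c.deriv₁ e₁ u), Mono u := by
  obtain ⟨M, _, _, _, _, _, u, hM, hN, _, rfl, rfl⟩ := exists_isPullback_isPushout_of_mono n2 n1
  have mono_p2 := hM.mono_fst_of_mono
  have mono_p1 := hM.mono_snd_of_mono
  obtain ⟨e₂', ⟨E₂⟩⟩ := e₂.exists_extension_of_comp_mono
  obtain ⟨e₁', ⟨E₁⟩⟩ := e₁.exists_extension_of_comp_mono
  exact ⟨M, _, _, .ofDerivs mono_p2 mono_p1 hN e₂' e₁' (.of_hasPullback _ _), u, E₂, E₁,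
    inferInstance⟩

end Composition

theorem dpo_composition_assoc_left_to_right_general
    {𝒞 : Type u} [Category.{v} 𝒞] [Adhesive 𝒞] (r1 r2 r3 : Rule 𝒞)
    {M21 : 𝒞} {p2 : M21 ⟶ r2.I} {p1 : M21 ⟶ r1.O}
    (c21 : CompData r2 r1 M21 p2 p1)
    {M3 : 𝒞} {p3 : M3 ⟶ r3.I} {p21 : M3 ⟶ (c21.rule).O}
    (c321 : CompData r3 c21.rule M3 p3 p21) :
    ∃ (M32 : 𝒞) (q3 : M32 ⟶ r3.I) (q2 : M32 ⟶ r2.O)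
      (c32 : CompData r3 r2 M32 q3 q2)
      (M' : 𝒞) (s32 : M' ⟶ (c32.rule).I) (s1 : M' ⟶ r1.O)
      (cfin : CompData c32.rule r1 M' s32 s1),
      RuleIso c321.rule cfin.rule := by
  obtain ⟨f₂, E₂, D₁, s₁, d₁, ds₁, b₂, b₁, left₁, right₁, hb, hd, hds⟩ :=
    exists_extension_of_isPushout_of_isPullback (e₂ := c21.deriv₂.reverse_s8) (e₁ := c21.deriv₁)
      c21.pbK c321.poc1 c321.poI
  have : Mono E₂.v := E₂.mono_v c321.mono_n1
  have : Mono (c21.c2 ≫ c321.n1) := mono_comp' c21.deriv₂.mono_ms_s8 c321.mono_n1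
  obtain ⟨M32, q3, q2, c32, u, E₃, E₂', mono_u⟩ := exists_compData_extension c321.deriv₂ f₂
  have : Mono E₂'.v := E₂'.mono_v mono_u
  have hE := (IsPullback.of_hasPullback f₂.d c321.w2).flip
  obtain ⟨κ, hO, hI⟩ := E₃.exists_isPushout_comp E₂' c32.pbK hE
  have := c321.mono_p2
  have cover : JointlyExtremalEpi E₂'.v (c21.n1 ≫ E₂.v) :=
    (jointlyExtremalEpi_of_extensions E₂' E₂ (E₃.match_comp ▸ c321.poN)).comp_of_isPushout c21.poN
      (E₂'.comatch_comp.trans E₂.comatch_comp.symm)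
  obtain ⟨M', s32, s1, mono_s32, mono_s1, hN⟩ := cover.exists_isPushout
  obtain ⟨θ, hθ, hK⟩ := exists_isPullback_of_isPullback_comp_s8 hE hb (hd ▸ c321.pbK)
  let comp32 : DerivData c32.rule.o c32.rule.i E₂'.v := ⟨_, κ, _, hI, _, E₃.v, _, hO⟩
  refine ⟨M32, q3, q2, c32, M', s32, s1,
    .ofDerivs mono_s32 mono_s1 hN comp32 (c21.deriv₁.extend left₁ right₁) hK,
    .refl _, .refl _, .refl _, ?_, ?_⟩
  · simp [CompData.rule, comp32, reassoc_of% hθ]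
  · simp [CompData.rule, hds]

/-- **Associativity of DPO rule composition (first direction).** If `μ21` is a
DPO-admissible match of `r2` into `r1` with composite `r21 = r2 ▷[μ21] r1`, and
`μ3(21)` is a DPO-admissible match of `r3` into `r21`, then there exist a
DPO-admissible match `μ32` of `r3` into `r2` and a DPO-admissible match `μ(32)1` of
`r32 = r3 ▷[μ32] r2` into `r1` such that `r3 ▷[μ3(21)] (r2 ▷[μ21] r1)` and
`(r3 ▷[μ32] r2) ▷[μ(32)1] r1` are isomorphic as spans. -/
theorem dpo_composition_assoc_left_to_right
    {𝒞 : Type u} [Category.{v} 𝒞] [Adhesive 𝒞]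
    [HasInitial 𝒞] [HasStrictInitialObjects 𝒞] [InitialMonoClass 𝒞]
    (hfact : HasEpiMonoFact 𝒞) (hfin : Finitary 𝒞)
    (r1 r2 r3 : Rule 𝒞)
    {M21 : 𝒞} {p2 : M21 ⟶ r2.I} {p1 : M21 ⟶ r1.O}
    (c21 : CompData r2 r1 M21 p2 p1)
    {M3 : 𝒞} {p3 : M3 ⟶ r3.I} {p21 : M3 ⟶ (c21.rule).O}
    (c321 : CompData r3 c21.rule M3 p3 p21) :
    ∃ (M32 : 𝒞) (q3 : M32 ⟶ r3.I) (q2 : M32 ⟶ r2.O)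
      (c32 : CompData r3 r2 M32 q3 q2)
      (M' : 𝒞) (s32 : M' ⟶ (c32.rule).I) (s1 : M' ⟶ r1.O)
      (cfin : CompData c32.rule r1 M' s32 s1),
      RuleIso c321.rule cfin.rule :=
  dpo_composition_assoc_left_to_right_general r1 r2 r3 c21 c321
end

section
/- (Decomposition of the application of a composite span into an n-step derivation, rules without application conditions.) Let C be a category satisfying the stated assumptions, let t_1, ..., t_n be composable spans of monomorphisms with t_j a span from Y_j to Y_{j−1} (for j = 1, ..., n), and let r = t_n ∘ ... ∘ t_1 be their span composition, a linear rule with output object Y_n and input object Y_0. Then for every object X_0 and every DPO-admissible match m : Y_0 → X_0 for r, there exist objects X_1, ..., X_n, DPO-admissible matches m_j : Y_{j−1} → X_{j−1} for t_j, and DPO direct derivations X_j = (t_j)_{m_j}(X_{j−1}) for j = 1, ..., n, such that X_n is isomorphic to r_m(X_0); moreover these data are determined uniquely up to isomorphism. -/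
open CategoryTheory CategoryTheory.Limits

universe v u

/-- A decomposition of the application of a composite span into an `n`-step DPO
derivation sequence: states `X j` (starting at `X0`, with initial match `m`),
matches/comatches `mt j : Y j ⟶ X j`, and for every `j < n` a DPO direct derivation
applying the `(j+1)`-st span `(Y (j+1) ⟵o j— K j —i j⟶ Y j)` at match `mt j`, whose
comatch is `mt (j+1)`. -/
structure Decomp {𝒞 : Type u} [Category.{v} 𝒞] (n : ℕ) (Y K : ℕ → 𝒞)
    (o : ∀ j, K j ⟶ Y (j + 1)) (i : ∀ j, K j ⟶ Y j)
    (X0 : 𝒞) (m : Y 0 ⟶ X0) where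
  X : ℕ → 𝒞
  hX0 : X 0 = X0
  mt : ∀ j, Y j ⟶ X j
  hm0 : mt 0 ≫ eqToHom hX0 = m
  mono_mt : ∀ j, j ≤ n → Mono (mt j)
  D : ℕ → 𝒞
  k : ∀ j, K j ⟶ D j
  d : ∀ j, D j ⟶ X j
  poc : ∀ j, j < n → IsPushout (i j) (k j) (mt j) (d j)
  ds : ∀ j, D j ⟶ X (j + 1)
  po : ∀ j, j < n → IsPushout (o j) (k j) (mt (j + 1)) (ds j)

/-!
A derivation with the composite span glues a context `D` onto the apex `P` of the composite. Since
`P` maps compatibly to the apex and both feet of every factor `t_j`, gluing `D` along these maps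
yields all intermediate states and contexts, and pasting of pushouts shows that they form direct
derivations. Uniqueness holds step by step, because in an adhesive category the complement of a
pushout along a monomorphism is unique up to isomorphism.
-/

section PushoutComplement

variable {𝒞 : Type u} [Category.{v} 𝒞] [Adhesive 𝒞] {A B D D' X : 𝒞} {f : A ⟶ B} [Mono f]
  {g : A ⟶ D} {g' : A ⟶ D'} {h : B ⟶ X} {d : D ⟶ X} {d' : D' ⟶ X}

-- Pulling the van Kampen square of `D'` back along `d` exhibits `D ×[X] D' ⟶ D` as a pushout of the
-- isomorphism `A ×[B] A ⟶ A`.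
theorem isIso_fst_of_isPushout_of_isPushout (hD : IsPushout f g h d) (hD' : IsPushout f g' h d')
    {U : 𝒞} {p : U ⟶ D} {p' : U ⟶ D'} (hU : IsPullback p p' d d') : IsIso p := by
  have hA : IsPullback g f d h := (Adhesive.isPullback_of_isPushout_of_mono_left hD).flip
  obtain ⟨W, q, _, _, hW, -, hpush⟩ := (Adhesive.van_kampen hD').exists_cube_filling hA hU
  have : IsIso q := hW.isIso_fst_of_mono
  exact hpush.isIso_inr_of_isIso

theorem exists_fac_of_isPushout_of_isPushout (hD : IsPushout f g h d)
    (hD' : IsPushout f g' h d') : ∃ φ : D ⟶ D', φ ≫ d' = d := by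
  have : Mono d := Adhesive.mono_of_isPushout_of_mono_left hD
  have := isIso_fst_of_isPushout_of_isPushout hD hD' (.of_hasPullback d d')
  exact ⟨inv (pullback.fst d d') ≫ pullback.snd d d', by simp [← pullback.condition]⟩

theorem exists_iso_of_isPushout_of_isPushout (hD : IsPushout f g h d)
    (hD' : IsPushout f g' h d') : ∃ φ : D ≅ D', g ≫ φ.hom = g' ∧ φ.hom ≫ d' = d := by
  have : Mono d := Adhesive.mono_of_isPushout_of_mono_left hD
  have : Mono d' := Adhesive.mono_of_isPushout_of_mono_left hD'
  obtain ⟨φ, hφ⟩ := exists_fac_of_isPushout_of_isPushout hD hD'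
  obtain ⟨ψ, hψ⟩ := exists_fac_of_isPushout_of_isPushout hD' hD
  refine ⟨⟨φ, ψ, by simp [← cancel_mono d, hφ, hψ], by simp [← cancel_mono d', hφ, hψ]⟩, ?_, hφ⟩
  rw [← cancel_mono d', Category.assoc, hφ, ← hD.w, hD'.w]

end PushoutComplement

/-- `y` is the comatch of a DPO direct derivation applying the span `O ⟵o— K —i⟶ I` at the match
`x`. An object of `Under I` bundles a state with a match of `I` into it. -/
def DirectDerivation {𝒞 : Type u} [Category.{v} 𝒞] {O K I : 𝒞} (o : K ⟶ O) (i : K ⟶ I)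
    (x : Under I) (y : Under O) : Prop :=
  ∃ (D : 𝒞) (k : K ⟶ D) (d : D ⟶ x.right) (ds : D ⟶ y.right),
    IsPushout i k x.hom d ∧ IsPushout o k y.hom ds

theorem DerivData.directDerivation {𝒞 : Type u} [Category.{v} 𝒞] {O K I X : 𝒞} {o : K ⟶ O}
    {i : K ⟶ I} {m : I ⟶ X} (dr : DerivData o i m) :
    DirectDerivation o i (Under.mk m) (Under.mk dr.ms) :=
  ⟨dr.D, dr.k, dr.d, dr.ds, dr.poc, dr.po⟩

namespace DirectDerivation

variable {𝒞 : Type u} [Category.{v} 𝒞] {O K I : 𝒞} {o : K ⟶ O} {i : K ⟶ I}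

theorem of_iso_apex {K' : 𝒞} {x : Under I} {y : Under O} (h : DirectDerivation o i x y)
    (e : K ≅ K') {o' : K' ⟶ O} {i' : K' ⟶ I} (ho : e.hom ≫ o' = o) (hi : e.hom ≫ i' = i) :
    DirectDerivation o' i' x y := by
  obtain ⟨D, k, d, ds, hx, hy⟩ := h
  exact ⟨D, e.inv ≫ k, d, ds,
    hx.of_iso e (.refl _) (.refl _) (.refl _) (by simp [hi]) (by simp) (by simp) (by simp),
    hy.of_iso e (.refl _) (.refl _) (.refl _) (by simp [ho]) (by simp) (by simp) (by simp)⟩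

theorem of_iso_match {x x' : Under I} {y : Under O} (h : DirectDerivation o i x y) (e : x ≅ x') :
    DirectDerivation o i x' y := by
  obtain ⟨D, k, d, ds, hx, hy⟩ := h
  exact ⟨D, k, d ≫ e.hom.right, ds,
    hx.of_iso (.refl _) (.refl _) (.refl _) ((Under.forget _).mapIso e)
      (by simp) (by simp) (by simp) (by simp), hy⟩

variable [Adhesive 𝒞]

theorem mono_comatch [Mono i] {x : Under I} {y : Under O} (h : DirectDerivation o i x y)
    [Mono x.hom] : Mono y.hom := by
  obtain ⟨D, k, d, ds, hx, hy⟩ := h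
  have : Mono k := (Adhesive.isPullback_of_isPushout_of_mono_left hx).mono_snd_of_mono
  exact Adhesive.mono_of_isPushout_of_mono_right hy

theorem nonempty_iso [Mono i] {x x' : Under I} {y y' : Under O} (h : DirectDerivation o i x y)
    (h' : DirectDerivation o i x' y') (e : x ≅ x') : Nonempty (y ≅ y') := by
  obtain ⟨D, k, d, ds, hx, hy⟩ := h.of_iso_match e
  obtain ⟨D', k', d', ds', hx', hy'⟩ := h'
  obtain ⟨φ, hk, -⟩ := exists_iso_of_isPushout_of_isPushout hx hx'
  have hy'' : IsPushout o k' y.hom (φ.inv ≫ ds) :=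
    hy.of_iso (.refl _) (.refl _) φ (.refl _) (by simp) (by simp [hk]) (by simp) (by simp)
  exact ⟨Under.isoMk (hy''.isoIsPushout _ _ hy') (hy''.inl_isoIsPushout_hom _ _ hy')⟩

theorem exists_intermediate {P Y L Z : 𝒞} {o : K ⟶ Y} {i : K ⟶ I} {o' : L ⟶ Z} {i' : L ⟶ Y}
    {a : P ⟶ K} {b : P ⟶ L} (w : a ≫ o = b ≫ i') [Mono (a ≫ i)] {x : Under I} [Mono x.hom]
    {z : Under Z} (h : DirectDerivation (b ≫ o') (a ≫ i) x z) :
    ∃ y : Under Y, DirectDerivation o i x y ∧ DirectDerivation o' i' y z := by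
  obtain ⟨D, k, d, ds, hx, hz⟩ := h
  have : Mono k := (Adhesive.isPullback_of_isPushout_of_mono_left hx).mono_snd_of_mono
  obtain ⟨X₁, y, g, hY⟩ : ∃ (X₁ : 𝒞) (y : Y ⟶ X₁) (g : D ⟶ X₁), IsPushout (a ≫ o) k y g :=
    ⟨_, _, _, (IsPushout.of_hasPushout k (a ≫ o)).flip⟩
  have hY' : IsPushout (b ≫ i') k y g := w ▸ hY
  have hK : IsPushout a k _ _ := (IsPushout.of_hasPushout k a).flip
  have hL : IsPushout b k _ _ := (IsPushout.of_hasPushout k b).flip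
  exact ⟨Under.mk y, ⟨_, _, _, _, .of_left' hx hK, .of_left' hY hK⟩,
    ⟨_, _, _, _, .of_left' hY' hL, .of_left' hz hL⟩⟩

end DirectDerivation

section DerivationSeq

variable {𝒞 : Type u} [Category.{v} 𝒞] {n : ℕ} {Y K : ℕ → 𝒞} {o : ∀ j, K j ⟶ Y (j + 1)}
  {i : ∀ j, K j ⟶ Y j}

/-- The states-with-matches `x 0, …, x n` form an `n`-step derivation sequence with respect to the
composable spans `(o j, i j)`, each comatch being the match of the next step. The entries `x j` with
`n < j` are unconstrained. -/
def IsDerivationSeq (n : ℕ) (o : ∀ j, K j ⟶ Y (j + 1)) (i : ∀ j, K j ⟶ Y j)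
    (x : ∀ j, Under (Y j)) : Prop :=
  ∀ j < n, DirectDerivation (o j) (i j) (x j) (x (j + 1))

theorem Decomp.isDerivationSeq {X₀ : 𝒞} {m : Y 0 ⟶ X₀} (dec : Decomp n Y K o i X₀ m) :
    IsDerivationSeq n o i fun j ↦ Under.mk (dec.mt j) :=
  fun j hj ↦ ⟨dec.D j, dec.k j, dec.d j, dec.ds j, dec.poc j hj, dec.po j hj⟩

/-- The isomorphism between the given initial match and the one recorded in a decomposition. -/
def Decomp.initialIso {X₀ : 𝒞} {m : Y 0 ⟶ X₀} (dec : Decomp n Y K o i X₀ m) :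
    Under.mk (dec.mt 0) ≅ Under.mk m :=
  Under.isoMk (eqToIso dec.hX0) dec.hm0

namespace IsDerivationSeq

theorem update {x : ∀ j, Under (Y j)} (hx : IsDerivationSeq n o i x) {y : Under (Y (n + 1))}
    (hy : DirectDerivation (o n) (i n) (x n) y) :
    IsDerivationSeq (n + 1) o i (Function.update x (n + 1) y) := by
  intro j hj
  obtain hj | rfl := Nat.lt_succ_iff_lt_or_eq.mp hj
  · simpa [Function.update_of_ne, hj.ne, (hj.trans n.lt_succ_self).ne] using hx j hj
  · simpa using hy

variable [Adhesive 𝒞]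

theorem mono_hom (mono_i : ∀ j < n, Mono (i j)) {x : ∀ j, Under (Y j)}
    (hx : IsDerivationSeq n o i x) [Mono (x 0).hom] {j : ℕ} (hj : j ≤ n) : Mono (x j).hom := by
  induction j with
  | zero => infer_instance
  | succ j ih =>
    have := ih (by omega)
    have := mono_i j hj
    exact (hx j hj).mono_comatch

theorem nonempty_iso (mono_i : ∀ j < n, Mono (i j)) {x x' : ∀ j, Under (Y j)}
    (hx : IsDerivationSeq n o i x) (hx' : IsDerivationSeq n o i x') (e : x 0 ≅ x' 0) {j : ℕ}
    (hj : j ≤ n) : Nonempty (x j ≅ x' j) := by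
  induction j with
  | zero => exact ⟨e⟩
  | succ j ih =>
    obtain ⟨e⟩ := ih (by omega)
    have := mono_i j hj
    exact (hx j hj).nonempty_iso (hx' j hj) e

theorem exists_decomp (mono_i : ∀ j < n, Mono (i j)) {x : ∀ j, Under (Y j)}
    (hx : IsDerivationSeq n o i x) {X₀ : 𝒞} {m : Y 0 ⟶ X₀} [Mono m] (h₀ : x 0 = Under.mk m) :
    ∃ dec : Decomp n Y K o i X₀ m, ∀ j, Under.mk (dec.mt j) = x j := by
  -- `Decomp` records a context for every `j`, so the steps `j ≥ n` get the apex `K j` as a dummy.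
  have hstep : ∀ j, ∃ (D : 𝒞) (k : K j ⟶ D) (d : D ⟶ (x j).right) (ds : D ⟶ (x (j + 1)).right),
      j < n → IsPushout (i j) k (x j).hom d ∧ IsPushout (o j) k (x (j + 1)).hom ds := by
    intro j
    by_cases hj : j < n
    · obtain ⟨D, k, d, ds, h⟩ := hx j hj
      exact ⟨D, k, d, ds, fun _ ↦ h⟩
    · exact ⟨K j, 𝟙 _, i j ≫ (x j).hom, o j ≫ (x (j + 1)).hom, fun h ↦ absurd h hj⟩
  choose D k d ds hpush using hstep
  have : Mono (x 0).hom := by rw [h₀]; assumption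
  exact ⟨{
    X j := (x j).right
    hX0 := by rw [h₀]; rfl
    mt j := (x j).hom
    hm0 := by simpa using Under.w (eqToHom h₀)
    mono_mt j hj := hx.mono_hom mono_i hj
    D, k, d, ds
    poc j hj := (hpush j hj).1
    po j hj := (hpush j hj).2 }, fun _ ↦ rfl⟩

end IsDerivationSeq

/-- The spans `Y j ⟵top j— P j —bot j⟶ Y 0` for `1 ≤ j ≤ n` are the composites of the first `j` of
the spans `Y (j + 1) ⟵o j— K j —i j⟶ Y j`, computed by iterated pullback. -/
structure IsSpanComposite (n : ℕ) (o : ∀ j, K j ⟶ Y (j + 1)) (i : ∀ j, K j ⟶ Y j) {P : ℕ → 𝒞}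
    (top : ∀ j, P j ⟶ Y j) (bot : ∀ j, P j ⟶ Y 0) : Prop where
  base : ∃ e : P 1 ≅ K 0, e.hom ≫ o 0 = top 1 ∧ e.hom ≫ i 0 = bot 1
  step : ∀ j, 1 ≤ j → j < n → ∃ (pl : P (j + 1) ⟶ K j) (pk : P (j + 1) ⟶ P j),
    IsPullback pl pk (i j) (top j) ∧ top (j + 1) = pl ≫ o j ∧ bot (j + 1) = pk ≫ bot j

namespace IsSpanComposite

variable {P : ℕ → 𝒞} {top : ∀ j, P j ⟶ Y j} {bot : ∀ j, P j ⟶ Y 0}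

theorem mono_bot (hP : IsSpanComposite n o i top bot) (mono_i : ∀ j < n, Mono (i j)) {j : ℕ}
    (hj : 1 ≤ j) (hjn : j ≤ n) : Mono (bot j) := by
  induction j, hj using Nat.le_induction with
  | base =>
    obtain ⟨e, -, hbot⟩ := hP.base
    have := mono_i 0 hjn
    exact hbot ▸ inferInstance
  | succ j hj ih =>
    obtain ⟨pl, pk, hpb, -, hbot⟩ := hP.step j hj hjn
    have := mono_i j hjn
    have : Mono pk := hpb.mono_snd_of_mono
    have := ih (by omega)
    exact hbot ▸ inferInstance

theorem exists_isDerivationSeq [Adhesive 𝒞] (hP : IsSpanComposite n o i top bot)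
    (mono_i : ∀ j < n, Mono (i j)) {x₀ : Under (Y 0)} [Mono x₀.hom] {j : ℕ} (hj : 1 ≤ j)
    (hjn : j ≤ n) {y : Under (Y j)} (h : DirectDerivation (top j) (bot j) x₀ y) :
    ∃ x, IsDerivationSeq j o i x ∧ x 0 = x₀ ∧ x j = y := by
  induction j, hj using Nat.le_induction with
  | base =>
    obtain ⟨e, htop, hbot⟩ := hP.base
    let x : ∀ j, Under (Y j) := Function.update (fun j ↦ Under.mk (𝟙 (Y j))) 0 x₀
    have hx : IsDerivationSeq 0 o i x := fun j hj ↦ absurd hj j.not_lt_zero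
    have h₁ : DirectDerivation (o 0) (i 0) (x 0) y := by
      simpa [x] using h.of_iso_apex e htop hbot
    exact ⟨_, hx.update h₁, by simp [x], by simp⟩
  | succ j hj ih =>
    obtain ⟨pl, pk, hpb, htop, hbot⟩ := hP.step j hj hjn
    have : Mono (pk ≫ bot j) := hbot ▸ hP.mono_bot mono_i (by omega) hjn
    rw [htop, hbot] at h
    obtain ⟨z, hz, hzy⟩ := h.exists_intermediate hpb.w.symm
    obtain ⟨x, hx, rfl, rfl⟩ := ih (by omega) hz
    exact ⟨_, hx.update hzy, by simp, by simp⟩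

end IsSpanComposite

end DerivationSeq

theorem dpo_composite_decomposition_general {𝒞 : Type u} [Category.{v} 𝒞] [Adhesive 𝒞] {n : ℕ}
    (hn : 1 ≤ n) {Y K : ℕ → 𝒞} {o : ∀ j, K j ⟶ Y (j + 1)} {i : ∀ j, K j ⟶ Y j}
    (mono_i : ∀ j < n, Mono (i j)) {P : ℕ → 𝒞} {top : ∀ j, P j ⟶ Y j} {bot : ∀ j, P j ⟶ Y 0}
    (hP : IsSpanComposite n o i top bot) {X₀ : 𝒞} (m : Y 0 ⟶ X₀) [Mono m]
    (dr : DerivData (top n) (bot n) m) :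
    (∃ dec : Decomp n Y K o i X₀ m, Nonempty (Under.mk (dec.mt n) ≅ Under.mk dr.ms)) ∧
      ∀ dec dec' : Decomp n Y K o i X₀ m, ∀ j ≤ n,
        Nonempty (Under.mk (dec.mt j) ≅ Under.mk (dec'.mt j)) := by
  constructor
  · have : Mono (Under.mk m).hom := ‹Mono m›
    obtain ⟨x, hx, h₀, hlast⟩ := hP.exists_isDerivationSeq mono_i hn le_rfl dr.directDerivation
    obtain ⟨dec, hdec⟩ := hx.exists_decomp mono_i h₀
    exact ⟨dec, ⟨eqToIso ((hdec n).trans hlast)⟩⟩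
  · intro dec dec' j hj
    exact dec.isDerivationSeq.nonempty_iso mono_i dec'.isDerivationSeq
      (dec.initialIso ≪≫ dec'.initialIso.symm) hj

/-- **Decomposition of the application of a composite span into an `n`-step
derivation (DPO, rules without conditions).** Let `t_j = (Y j ⟵o— K j —i⟶ Y (j-1))`
(`j = 1, …, n`, here 0-indexed) be composable spans of monomorphisms, and let the
span `(Y n ⟵top n— P n —bot n⟶ Y 0)` be their span composition (witnessed by the
iterated-pullback data `hbase`, `hstep`).  Then for every object `X0` and every
DPO-admissible match `m : Y 0 ⟶ X0` for the composite (admissibility witnessed by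
the direct-derivation data `dr`), there exists an `n`-step DPO derivation sequence
decomposing the one-step application, with final state isomorphic to `r_m(X0)`;
moreover any two such decompositions have isomorphic states at every stage. -/
theorem dpo_composite_decomposition
    {𝒞 : Type u} [Category.{v} 𝒞] [Adhesive 𝒞]
    [HasInitial 𝒞] [HasStrictInitialObjects 𝒞] [InitialMonoClass 𝒞]
    (hfact : HasEpiMonoFact 𝒞) (hfin : Finitary 𝒞)
    (n : ℕ) (hn : 1 ≤ n) (Y K : ℕ → 𝒞)
    (o : ∀ j, K j ⟶ Y (j + 1)) (i : ∀ j, K j ⟶ Y j)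
    (mono_o : ∀ j, j < n → Mono (o j)) (mono_i : ∀ j, j < n → Mono (i j))
    (P : ℕ → 𝒞) (top : ∀ j, P j ⟶ Y j) (bot : ∀ j, P j ⟶ Y 0)
    (hbase : ∃ e : P 1 ≅ K 0, e.hom ≫ o 0 = top 1 ∧ e.hom ≫ i 0 = bot 1)
    (hstep : ∀ j, 1 ≤ j → j < n →
      ∃ (pl : P (j + 1) ⟶ K j) (pk : P (j + 1) ⟶ P j),
        IsPullback pl pk (i j) (top j) ∧
          top (j + 1) = pl ≫ o j ∧ bot (j + 1) = pk ≫ bot j)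
    (mono_top : Mono (top n)) (mono_bot : Mono (bot n))
    {X0 : 𝒞} (m : Y 0 ⟶ X0) [Mono m]
    (dr : DerivData (top n) (bot n) m) :
    (∃ dec : Decomp n Y K o i X0 m, Nonempty (dec.X n ≅ dr.Y)) ∧
      ∀ dec dec' : Decomp n Y K o i X0 m,
        ∀ j, j ≤ n → Nonempty (dec.X j ≅ dec'.X j) := by
  obtain ⟨⟨dec, ⟨e⟩⟩, hunique⟩ := dpo_composite_decomposition_general hn mono_i ⟨hbase, hstep⟩ m dr
  exact ⟨⟨dec, ⟨(Under.forget _).mapIso e⟩⟩, fun dec dec' j hj ↦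
    (hunique dec dec' j hj).map (Under.forget _).mapIso⟩
end

section
/- (Compositional characterization of sequential independence, DPO case, rules without application conditions.) Let C be a category satisfying the stated assumptions, and let X1 = (r1)_{m1}(X0) and X2 = (r2)_{m2}(X1) be two sequential DPO direct derivations for linear rules r1 = (O1 ←o1— K1 —i1→ I1) and r2 = (O2 ←o2— K2 —i2→ I2), with comatch m1* : O1 → X1. Let M21 be the pullback of the cospan (m2 : I2 → X1, m1* : O1 → X1) and let N21 be the pushout of the induced span (I2 ← M21 → O1), with induced monomorphisms n2 : I2 → N21 and n1 : O1 → N21. Then n2 admits a pushout complement K̄2 for (i2, n2), n1 admits a pushout complement K̄1 for (o1, n1), and the two derivations are sequentially independent if and only if there exist monomorphisms u : O1 → K̄2 and v : I2 → K̄1 such that (K̄2 → N21) ∘ u = n1 and (K̄1 → N21) ∘ v = n2. -/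
open CategoryTheory CategoryTheory.Limits

universe v u

/-!
A pushout along a monomorphism in an adhesive category is also a pullback and is stable under
pullback, so pulling a pushout complement `D` in `X₁` back along a subobject `N ↪ X₁` that contains
the match gives a pushout complement in `N`. Pushout complements of monomorphisms are unique, so
every pushout complement in `N` arises in this way, and a morphism into `N` factors through it if
and only if its composite with `N ↪ X₁` factors through `D`. Take for `N` the union `N21` of `m2`
and `m1*`, which is a subobject of `X₁` by adhesivity.
-/

section Adhesive

variable {𝒞 : Type u} [Category.{v} 𝒞] [Adhesive 𝒞]

theorem mono_desc_of_isPullback_s11 {A B M N X : 𝒞} {p : M ⟶ A} {q : M ⟶ B} {a : A ⟶ X} {b : B ⟶ X}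
    [Mono a] [Mono b] (hpb : IsPullback p q a b) {n : A ⟶ N} {n' : B ⟶ N}
    (hpo : IsPushout p q n n') : Mono (hpo.desc a b hpb.w) := by
  have hpo' : IsPushout (pullback.fst a b) (pullback.snd a b) n n' :=
    hpo.of_iso hpb.isoPullback (Iso.refl _) (Iso.refl _) (Iso.refl _)
      (by simp) (by simp) (by simp) (by simp)
  have desc_eq : hpo.desc a b hpb.w =
      hpo'.isoPushout.hom ≫ pushout.desc a b pullback.condition := by
    apply hpo.hom_ext
    · rw [hpo.inl_desc, hpo'.inl_isoPushout_hom_assoc, pushout.inl_desc]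
    · rw [hpo.inr_desc, hpo'.inr_isoPushout_hom_assoc, pushout.inr_desc]
  rw [desc_eq]
  infer_instance

theorem isPushout_lift_of_comp_mono_eq {K I D X N P : 𝒞} {i : K ⟶ I} {k : K ⟶ D} {m : I ⟶ X}
    {d : D ⟶ X} [Mono i] (hD : IsPushout i k m d) {x : N ⟶ X} [Mono x] {n : I ⟶ N}
    (hn : n ≫ x = m) {w : P ⟶ N} {y : P ⟶ D} (hP : IsPullback w y x d) :
    IsPushout i (hP.lift (i ≫ n) k (by rw [Category.assoc, hn, hD.w])) n w := by
  have : Mono y := hP.mono_snd_of_mono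
  have right : IsPullback n (𝟙 I) x m := .of_vert_isIso_mono ⟨by simpa using hn⟩
  have back : IsPullback (hP.lift (i ≫ n) k (by rw [Category.assoc, hn, hD.w])) (𝟙 K) y k :=
    .of_vert_isIso_mono ⟨by simp⟩
  exact (Adhesive.van_kampen hD _ _ _ _ _ _ _ _ (.id_vert i) back right.toCommSq hP.toCommSq
    ⟨by simp⟩).2 ⟨right, hP⟩

theorem exists_hom_of_pushoutComplements {K I D D' X : 𝒞} {i : K ⟶ I} [Mono i] {m : I ⟶ X}
    {k : K ⟶ D} {d : D ⟶ X} {k' : K ⟶ D'} {d' : D' ⟶ X}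
    (hD : IsPushout i k m d) (hD' : IsPushout i k' m d') : ∃ φ : D' ⟶ D, φ ≫ d = d' := by
  have : Mono d' := Adhesive.mono_of_isPushout_of_mono_left hD'
  have hD'_pullback : IsPullback k' i d' m :=
    (Adhesive.isPullback_of_isPushout_of_mono_left hD').flip
  have hQ : IsPullback (pullback.fst d' d) (pullback.snd d' d) d' d := .of_hasPullback d' d
  obtain ⟨_, f, _, _, hf, -, top⟩ :=
    (Adhesive.van_kampen hD).exists_cube_filling hD'_pullback hQ
  have : IsIso f := hf.isIso_fst_of_mono
  -- By the van Kampen property, the pullback of `d` along `d'` is a pushout of the isomorphism `f`.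
  have : IsIso (pullback.fst d' d) := top.isIso_inr_of_isIso
  exact ⟨inv (pullback.fst d' d) ≫ pullback.snd d' d, by simp [← hQ.w]⟩

theorem exists_iso_of_pushoutComplements {K I D D' X : 𝒞} {i : K ⟶ I} [Mono i] {m : I ⟶ X}
    {k : K ⟶ D} {d : D ⟶ X} {k' : K ⟶ D'} {d' : D' ⟶ X}
    (hD : IsPushout i k m d) (hD' : IsPushout i k' m d') :
    ∃ e : D' ≅ D, k' ≫ e.hom = k ∧ e.hom ≫ d = d' := by
  have : Mono d := Adhesive.mono_of_isPushout_of_mono_left hD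
  have : Mono d' := Adhesive.mono_of_isPushout_of_mono_left hD'
  obtain ⟨φ, hφ⟩ := exists_hom_of_pushoutComplements hD hD'
  obtain ⟨ψ, hψ⟩ := exists_hom_of_pushoutComplements hD' hD
  refine ⟨⟨φ, ψ, ?_, ?_⟩, ?_, hφ⟩
  · simp [← cancel_mono d', hφ, hψ]
  · simp [← cancel_mono d, hφ, hψ]
  · simp [← cancel_mono d, hφ, ← hD.w, ← hD'.w]

theorem exists_isPullback_of_pushoutComplements {K I D X N P : 𝒞} {i : K ⟶ I} {k : K ⟶ D}
    {m : I ⟶ X} {d : D ⟶ X} [Mono i] (hD : IsPushout i k m d) {x : N ⟶ X} [Mono x] {n : I ⟶ N}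
    (hn : n ≫ x = m) {k' : K ⟶ P} {w : P ⟶ N} (hP : IsPushout i k' n w) :
    ∃ y : P ⟶ D, IsPullback w y x d := by
  have hQ : IsPullback (pullback.fst x d) (pullback.snd x d) x d := .of_hasPullback x d
  obtain ⟨e, -, he⟩ := exists_iso_of_pushoutComplements (isPushout_lift_of_comp_mono_eq hD hn hQ) hP
  exact ⟨e.hom ≫ pullback.snd x d,
    hQ.of_iso e.symm (Iso.refl _) (Iso.refl _) (Iso.refl _) (by simp [← he]) (by simp) (by simp)
      (by simp)⟩

theorem DerivData.mono_ms_s11 {O K I X : 𝒞} {o : K ⟶ O} {i : K ⟶ I} {m : I ⟶ X} [Mono i] [Mono m]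
    (δ : DerivData o i m) : Mono δ.ms :=
  have : Mono δ.k := (Adhesive.isPullback_of_isPushout_of_mono_left δ.poc).mono_snd_of_mono
  Adhesive.mono_of_isPushout_of_mono_right δ.po

end Adhesive

theorem exists_mono_comp_eq_iff_of_isPullback {𝒞 : Type u} [Category.{v} 𝒞] {A D X N P : 𝒞}
    {w : P ⟶ N} {y : P ⟶ D} {x : N ⟶ X} {d : D ⟶ X} (hP : IsPullback w y x d)
    {c : A ⟶ N} {c' : A ⟶ X} [Mono c'] (hc : c ≫ x = c') :
    (∃ g : A ⟶ D, Mono g ∧ g ≫ d = c') ↔ ∃ f : A ⟶ P, Mono f ∧ f ≫ w = c := by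
  have : Mono c := mono_of_mono_fac hc
  constructor
  · rintro ⟨g, -, hg⟩
    have hf : hP.lift c g (hc.trans hg.symm) ≫ w = c := hP.lift_fst _ _ _
    exact ⟨_, mono_of_mono_fac hf, hf⟩
  · rintro ⟨f, -, hf⟩
    have hg : (f ≫ y) ≫ d = c' := by rw [Category.assoc, ← hP.w, reassoc_of% hf, hc]
    exact ⟨_, mono_of_mono_fac hg, hg⟩

theorem dpo_sequential_independence_compositional_general
    {𝒞 : Type u} [Category.{v} 𝒞] [Adhesive 𝒞]
    (r1 r2 : Rule 𝒞)
    {X0 : 𝒞} (m1 : r1.I ⟶ X0) [Mono m1] (d1 : DerivData r1.o r1.i m1)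
    (m2 : r2.I ⟶ d1.Y) [Mono m2] (d2 : DerivData r2.o r2.i m2)
    {M21 : 𝒞} (p2 : M21 ⟶ r2.I) (p1 : M21 ⟶ r1.O)
    (hpb : IsPullback p2 p1 m2 d1.ms)
    {N21 : 𝒞} (n2 : r2.I ⟶ N21) (n1 : r1.O ⟶ N21)
    (hpo : IsPushout p2 p1 n2 n1) :
    (∃ (K2b : 𝒞) (k2 : r2.K ⟶ K2b) (w2 : K2b ⟶ N21),
        IsPushout r2.i k2 n2 w2) ∧
    (∃ (K1b : 𝒞) (k1 : r1.K ⟶ K1b) (w1 : K1b ⟶ N21),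
        IsPushout r1.o k1 n1 w1) ∧
    ∀ (K2b : 𝒞) (k2 : r2.K ⟶ K2b) (w2 : K2b ⟶ N21),
      IsPushout r2.i k2 n2 w2 →
      ∀ (K1b : 𝒞) (k1 : r1.K ⟶ K1b) (w1 : K1b ⟶ N21),
        IsPushout r1.o k1 n1 w1 →
        ((∃ (nn1 : r1.O ⟶ d2.D) (nn2 : r2.I ⟶ d1.D),
            Mono nn1 ∧ Mono nn2 ∧ nn1 ≫ d2.d = d1.ms ∧ nn2 ≫ d1.ds = m2) ↔
          (∃ (u : r1.O ⟶ K2b) (v : r2.I ⟶ K1b),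
            Mono u ∧ Mono v ∧ u ≫ w2 = n1 ∧ v ≫ w1 = n2)) := by
  have := r1.mono_o
  have := r1.mono_i
  have := r2.mono_i
  have := d1.mono_ms_s11
  have : Mono (hpo.desc m2 d1.ms hpb.w) := mono_desc_of_isPullback_s11 hpb hpo
  have hn2 : n2 ≫ hpo.desc m2 d1.ms hpb.w = m2 := hpo.inl_desc _ _ _
  have hn1 : n1 ≫ hpo.desc m2 d1.ms hpb.w = d1.ms := hpo.inr_desc _ _ _
  refine ⟨⟨_, _, _, isPushout_lift_of_comp_mono_eq d2.poc hn2 (.of_hasPullback _ _)⟩,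
    ⟨_, _, _, isPushout_lift_of_comp_mono_eq d1.po hn1 (.of_hasPullback _ _)⟩, ?_⟩
  intro K2b k2 w2 hK2b K1b k1 w1 hK1b
  obtain ⟨y2, hy2⟩ := exists_isPullback_of_pushoutComplements d2.poc hn2 hK2b
  obtain ⟨y1, hy1⟩ := exists_isPullback_of_pushoutComplements d1.po hn1 hK1b
  have factor_O1 := exists_mono_comp_eq_iff_of_isPullback hy2 hn1
  have factor_I2 := exists_mono_comp_eq_iff_of_isPullback hy1 hn2
  simpa only [exists_and_exists_comm, and_assoc, and_left_comm] using
    and_congr factor_O1 factor_I2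

/-- **Compositional characterization of sequential independence (DPO, rules without
conditions).** Given two sequential DPO direct derivations `X1 = (r1)_{m1}(X0)` and
`X2 = (r2)_{m2}(X1)`, with `M21` the pullback of `(m2, m1*)` and `N21` the pushout of
the induced span `(I2 ⟵p2— M21 —p1⟶ O1)`: `n2` admits a pushout complement for
`(r2.i, n2)`, `n1` admits a pushout complement for `(r1.o, n1)`, and the two
derivations are sequentially independent (existence of monomorphisms
`nn1 : O1 ⟶ D2`, `nn2 : I2 ⟶ D1` with `nn1 ≫ d2 = m1*` and `nn2 ≫ d1* = m2`) if and
only if there exist monomorphisms `u : O1 ⟶ K̄2` and `v : I2 ⟶ K̄1` with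
`u ≫ w2 = n1` and `v ≫ w1 = n2`. -/
theorem dpo_sequential_independence_compositional
    {𝒞 : Type u} [Category.{v} 𝒞] [Adhesive 𝒞]
    [HasInitial 𝒞] [HasStrictInitialObjects 𝒞] [InitialMonoClass 𝒞]
    (hfact : HasEpiMonoFact 𝒞) (hfin : Finitary 𝒞)
    (r1 r2 : Rule 𝒞)
    {X0 : 𝒞} (m1 : r1.I ⟶ X0) [Mono m1] (d1 : DerivData r1.o r1.i m1)
    (m2 : r2.I ⟶ d1.Y) [Mono m2] (d2 : DerivData r2.o r2.i m2)
    {M21 : 𝒞} (p2 : M21 ⟶ r2.I) (p1 : M21 ⟶ r1.O)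
    (hpb : IsPullback p2 p1 m2 d1.ms)
    {N21 : 𝒞} (n2 : r2.I ⟶ N21) (n1 : r1.O ⟶ N21)
    (hpo : IsPushout p2 p1 n2 n1) :
    (∃ (K2b : 𝒞) (k2 : r2.K ⟶ K2b) (w2 : K2b ⟶ N21),
        IsPushout r2.i k2 n2 w2) ∧
    (∃ (K1b : 𝒞) (k1 : r1.K ⟶ K1b) (w1 : K1b ⟶ N21),
        IsPushout r1.o k1 n1 w1) ∧
    ∀ (K2b : 𝒞) (k2 : r2.K ⟶ K2b) (w2 : K2b ⟶ N21),
      IsPushout r2.i k2 n2 w2 →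
      ∀ (K1b : 𝒞) (k1 : r1.K ⟶ K1b) (w1 : K1b ⟶ N21),
        IsPushout r1.o k1 n1 w1 →
        ((∃ (nn1 : r1.O ⟶ d2.D) (nn2 : r2.I ⟶ d1.D),
            Mono nn1 ∧ Mono nn2 ∧ nn1 ≫ d2.d = d1.ms ∧ nn2 ≫ d1.ds = m2) ↔
          (∃ (u : r1.O ⟶ K2b) (v : r2.I ⟶ K1b),
            Mono u ∧ Mono v ∧ u ≫ w2 = n1 ∧ v ≫ w1 = n2)) :=
  dpo_sequential_independence_compositional_general r1 r2 m1 d1 m2 d2 p2 p1 hpb n2 n1 hpo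
end

section
/- (Compositional concurrent commutativity, part (i).) Let C be a category satisfying the stated assumptions, let r1 = (O1 ←o1— K1 —i1→ I1) and r2 = (O2 ←o2— K2 —i2→ I2) be linear rules, and assume μ21 = (I2 ← M21 → O1) is a DPO-admissible match of r2 into r1, with associated pushout N21 (induced morphisms n2 : I2 → N21, n1 : O1 → N21), pushout complements K̄2 (for (i2, n2)) and K̄1 (for (o1, n1)), and assume there exist monomorphisms u : O1 → K̄2 and v : I2 → K̄1 such that (K̄2 → N21) ∘ u = n1 and (K̄1 → N21) ∘ v = n2. Then the pullback of the cospan (u : O1 → K̄2, K2 → K̄2) is isomorphic to M21, compatibly with the leg M21 → O1 of μ21, and the pullback of the cospan (v : I2 → K̄1, K1 → K̄1) is isomorphic to M21, compatibly with the leg M21 → I2 of μ21; in particular this furnishes monomorphisms a1 : M21 → K1 and a2 : M21 → K2 with (K1 → K̄1) ∘ a1 = v ∘ (M21 → I2) and (K2 → K̄2) ∘ a2 = u ∘ (M21 → O1). -/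
open CategoryTheory CategoryTheory.Limits

universe v u

/-! In an adhesive category pushouts along monomorphisms are pullbacks. Since `u ≫ w2 = n1`, the
pullback square on `(n2, n1)` is the pasting of a square over `u` with the pullback square on
`(n2, w2)`, so the square over `u` is itself a pullback. The half for `v` is the same argument with
the roles of `(r2.i, n2)` and `(r1.o, n1)` exchanged. -/

section FactorThroughComplement

variable {𝒞 : Type u} [Category.{v} 𝒞] {M I O K D N : 𝒞} {p : M ⟶ I} {q : M ⟶ O} {n : I ⟶ N}
  {m : O ⟶ N} {i : K ⟶ I} {k : K ⟶ D} {w : D ⟶ N} {u : O ⟶ D}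

theorem exists_isPullback_of_fac (hM : IsPullback p q n m) (hK : IsPullback i k n w)
    (hu : u ≫ w = m) : ∃ a : M ⟶ K, a ≫ i = p ∧ IsPullback q a u k := by
  subst hu
  exact ⟨_, hK.lift_fst _ _ _, (IsPullback.of_right' hM hK).flip⟩

theorem exists_mono_isPullback_of_isPushout_of_fac [Adhesive 𝒞] [Mono p] [Mono i]
    (hM : IsPushout p q n m) (hK : IsPushout i k n w) (hu : u ≫ w = m) :
    ∃ a : M ⟶ K, Mono a ∧ IsPullback q a u k := by
  obtain ⟨a, hai, hpb⟩ := exists_isPullback_of_fac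
    (Adhesive.isPullback_of_isPushout_of_mono_left hM)
    (Adhesive.isPullback_of_isPushout_of_mono_left hK) hu
  exact ⟨a, mono_of_mono_fac hai, hpb⟩

end FactorThroughComplement

theorem dpo_ccc_part_i_general {𝒞 : Type u} [Category.{v} 𝒞] [Adhesive 𝒞] (r1 r2 : Rule 𝒞)
    {M21 : 𝒞} (p2 : M21 ⟶ r2.I) (p1 : M21 ⟶ r1.O) [Mono p2] [Mono p1]
    {N21 : 𝒞} (n2 : r2.I ⟶ N21) (n1 : r1.O ⟶ N21) (hpo : IsPushout p2 p1 n2 n1)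
    {K2b : 𝒞} (k2 : r2.K ⟶ K2b) (w2 : K2b ⟶ N21) (hpoc2 : IsPushout r2.i k2 n2 w2)
    {K1b : 𝒞} (k1 : r1.K ⟶ K1b) (w1 : K1b ⟶ N21) (hpoc1 : IsPushout r1.o k1 n1 w1)
    (u : r1.O ⟶ K2b) (v : r2.I ⟶ K1b) (hu : u ≫ w2 = n1) (hv : v ≫ w1 = n2) :
    (∃ a2 : M21 ⟶ r2.K, Mono a2 ∧ IsPullback p1 a2 u k2) ∧
    (∃ a1 : M21 ⟶ r1.K, Mono a1 ∧ IsPullback p2 a1 v k1) :=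
  ⟨exists_mono_isPullback_of_isPushout_of_fac hpo hpoc2 hu,
    exists_mono_isPullback_of_isPushout_of_fac hpo.flip hpoc1 hv⟩

/-- **Compositional concurrent commutativity, part (i).** Given a DPO-admissible
match `μ21 = (I2 ⟵p2— M21 —p1⟶ O1)` of `r2` into `r1` with pushout `N21`, pushout
complements `K̄2` (for `(i2, n2)`) and `K̄1` (for `(o1, n1)`), and monomorphisms
`u : O1 ⟶ K̄2`, `v : I2 ⟶ K̄1` with `u ≫ w2 = n1` and `v ≫ w1 = n2`, the pullback of
`(u, k2 : K2 ⟶ K̄2)` is `M21` (compatibly with the leg `p1 : M21 ⟶ O1`), and the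
pullback of `(v, k1 : K1 ⟶ K̄1)` is `M21` (compatibly with the leg `p2 : M21 ⟶ I2`);
in particular this furnishes monomorphisms `a2 : M21 ⟶ K2` and `a1 : M21 ⟶ K1`. -/
theorem dpo_ccc_part_i
    {𝒞 : Type u} [Category.{v} 𝒞] [Adhesive 𝒞]
    [HasInitial 𝒞] [HasStrictInitialObjects 𝒞] [InitialMonoClass 𝒞]
    (hfact : HasEpiMonoFact 𝒞) (hfin : Finitary 𝒞)
    (r1 r2 : Rule 𝒞)
    {M21 : 𝒞} (p2 : M21 ⟶ r2.I) (p1 : M21 ⟶ r1.O) [Mono p2] [Mono p1]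
    {N21 : 𝒞} (n2 : r2.I ⟶ N21) (n1 : r1.O ⟶ N21) [Mono n2] [Mono n1]
    (hpo : IsPushout p2 p1 n2 n1)
    {K2b : 𝒞} (k2 : r2.K ⟶ K2b) (w2 : K2b ⟶ N21)
    (hpoc2 : IsPushout r2.i k2 n2 w2)
    {K1b : 𝒞} (k1 : r1.K ⟶ K1b) (w1 : K1b ⟶ N21)
    (hpoc1 : IsPushout r1.o k1 n1 w1)
    (u : r1.O ⟶ K2b) (v : r2.I ⟶ K1b) [Mono u] [Mono v]
    (hu : u ≫ w2 = n1) (hv : v ≫ w1 = n2) :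
    (∃ a2 : M21 ⟶ r2.K, Mono a2 ∧ IsPullback p1 a2 u k2) ∧
    (∃ a1 : M21 ⟶ r1.K, Mono a1 ∧ IsPullback p2 a1 v k1) :=
  dpo_ccc_part_i_general r1 r2 p2 p1 n2 n1 hpo k2 w2 hpoc2 k1 w1 hpoc1 u v hu hv
end

section
/- (Compositional concurrent commutativity, part (ii).) Let C be a category satisfying the stated assumptions, let r1 = (O1 ←o1— K1 —i1→ I1) and r2 = (O2 ←o2— K2 —i2→ I2) be linear rules, and assume μ21 = (I2 ← M21 → O1) is a DPO-admissible match of r2 into r1, with associated pushout N21 (induced morphisms n2 : I2 → N21, n1 : O1 → N21), pushout complements K̄2 (for (i2, n2)) and K̄1 (for (o1, n1)), and assume there exist monomorphisms u : O1 → K̄2 and v : I2 → K̄1 such that (K̄2 → N21) ∘ u = n1 and (K̄1 → N21) ∘ v = n2. Let a1 : M21 → K1 and a2 : M21 → K2 be the monomorphisms obtained from the pullbacks of (v : I2 → K̄1, K1 → K̄1) and (u : O1 → K̄2, K2 → K̄2), respectively (both pullbacks being isomorphic to M21). Then the span μ12 := (I1 ←(i1 ∘ a1)— M21 —(o2 ∘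 a2)→ O2) is a DPO-admissible match of r1 into r2. -/
open CategoryTheory CategoryTheory.Limits

universe v u

section PushoutComplements

variable {𝒞 : Type u} [Category.{v} 𝒞]

/-- Existence of a pushout complement for `K ⟶i⟶ I ⟶m⟶ X`: some `K ⟶k⟶ D ⟶d⟶ X` completes `i`
and `m` to a pushout square. For the inclusion `i` of a linear rule this is DPO-admissibility of
the match `m`. Only existence is recorded, so this is a proposition. -/
def HasPushoutComplement {K I X : 𝒞} (i : K ⟶ I) (m : I ⟶ X) : Prop :=
  ∃ (D : 𝒞) (k : K ⟶ D) (d : D ⟶ X), IsPushout i k m d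

theorem hasPushoutComplement_of_isPushout_comp {M K I O N : 𝒞} {a : M ⟶ K} {i : K ⟶ I}
    {b : M ⟶ O} {m : I ⟶ N} {n : O ⟶ N} [HasPushout a b] (h : IsPushout (a ≫ i) b m n) :
    HasPushoutComplement i m := by
  -- The complement is the pushout of `a` and `b`, by cancelling it from the composite square `h`.
  have inner : IsPushout a b (pushout.inl a b) (pushout.inr a b) := .of_hasPushout a b
  have comm : a ≫ i ≫ m = b ≫ n := by rw [← Category.assoc, h.w]
  have outer : IsPushout (a ≫ i) b m (pushout.inr a b ≫ pushout.desc (i ≫ m) n comm) := by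
    rwa [pushout.inr_desc]
  exact ⟨pushout a b, pushout.inl a b, pushout.desc (i ≫ m) n comm,
    .of_left outer (pushout.inl_desc _ _ _).symm inner⟩

end PushoutComplements

theorem dpo_ccc_part_ii_general {𝒞 : Type u} [Category.{v} 𝒞] [Adhesive 𝒞]
    (r1 r2 : Rule 𝒞) {M : 𝒞} (a1 : M ⟶ r1.K) (a2 : M ⟶ r2.K) [Mono a1] [Mono a2] :
    ∃ (N : 𝒞) (nI1 : r1.I ⟶ N) (nO2 : r2.O ⟶ N),
      IsPushout (a1 ≫ r1.i) (a2 ≫ r2.o) nI1 nO2 ∧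
      Mono nI1 ∧ Mono nO2 ∧
      HasPushoutComplement r1.i nI1 ∧ HasPushoutComplement r2.o nO2 := by
  have := r1.mono_i
  have := r2.mono_o
  have hN : IsPushout (a1 ≫ r1.i) (a2 ≫ r2.o) (pushout.inl _ _) (pushout.inr _ _) :=
    .of_hasPushout (a1 ≫ r1.i) (a2 ≫ r2.o)
  exact ⟨_, _, _, hN,
    Adhesive.mono_of_isPushout_of_mono_right hN, Adhesive.mono_of_isPushout_of_mono_left hN,
    hasPushoutComplement_of_isPushout_comp hN, hasPushoutComplement_of_isPushout_comp hN.flip⟩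

/-- **Compositional concurrent commutativity, part (ii).** In the setting of part
(i), with `a2 : M21 ⟶ K2` and `a1 : M21 ⟶ K1` the monomorphisms obtained from the
pullbacks of `(u, k2)` and `(v, k1)` respectively, the span
`μ12 = (I1 ⟵(a1 ≫ i1)— M21 —(a2 ≫ o2)⟶ O2)` is a DPO-admissible match of `r1` into
`r2`: its pushout `N12` has monic cocone legs, the leg `nI1 : I1 ⟶ N12` admits a
pushout complement for `(i1, nI1)`, and the leg `nO2 : O2 ⟶ N12` admits a pushout
complement for `(o2, nO2)`. -/
theorem dpo_ccc_part_ii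
    {𝒞 : Type u} [Category.{v} 𝒞] [Adhesive 𝒞]
    [HasInitial 𝒞] [HasStrictInitialObjects 𝒞] [InitialMonoClass 𝒞]
    (hfact : HasEpiMonoFact 𝒞) (hfin : Finitary 𝒞)
    (r1 r2 : Rule 𝒞)
    {M21 : 𝒞} (p2 : M21 ⟶ r2.I) (p1 : M21 ⟶ r1.O) [Mono p2] [Mono p1]
    {N21 : 𝒞} (n2 : r2.I ⟶ N21) (n1 : r1.O ⟶ N21) [Mono n2] [Mono n1]
    (hpo : IsPushout p2 p1 n2 n1)
    {K2b : 𝒞} (k2 : r2.K ⟶ K2b) (w2 : K2b ⟶ N21)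
    (hpoc2 : IsPushout r2.i k2 n2 w2)
    {K1b : 𝒞} (k1 : r1.K ⟶ K1b) (w1 : K1b ⟶ N21)
    (hpoc1 : IsPushout r1.o k1 n1 w1)
    (u : r1.O ⟶ K2b) (v : r2.I ⟶ K1b) [Mono u] [Mono v]
    (hu : u ≫ w2 = n1) (hv : v ≫ w1 = n2)
    (a2 : M21 ⟶ r2.K) [Mono a2] (ha2 : IsPullback p1 a2 u k2)
    (a1 : M21 ⟶ r1.K) [Mono a1] (ha1 : IsPullback p2 a1 v k1) :
    ∃ (N12 : 𝒞) (nI1 : r1.I ⟶ N12) (nO2 : r2.O ⟶ N12),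
      IsPushout (a1 ≫ r1.i) (a2 ≫ r2.o) nI1 nO2 ∧
      Mono nI1 ∧ Mono nO2 ∧
      (∃ (Kb : 𝒞) (kk : r1.K ⟶ Kb) (ww : Kb ⟶ N12),
        IsPushout r1.i kk nI1 ww) ∧
      (∃ (Kb : 𝒞) (kk : r2.K ⟶ Kb) (ww : Kb ⟶ N12),
        IsPushout r2.o kk nO2 ww) :=
  dpo_ccc_part_ii_general r1 r2 a1 a2
end
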